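/- arXiv:2409.06546 — 7 statements merged into one kernel-verified Lean document; each statement's English description precedes it below -/
import Mathlib

section
/- For every natural number n ≥ 1, ζ(2n+1) = (π^{2n-1} / (2n-1)!) · ∫_{-∞}^{∞} Q_n(x/π) · log(1 + e^x) / (1 + e^x) dx. -/
/-! The generating function of the moments of `h(x) = log (1 + e^x) / (1 + e^x)` is explicit: for
`0 < a < 1`,
`sin (π a) · ∫ e^{a x} h(x) dx = π · ∑_{j ≥ 1} ζ(j + 1) a^j`. (∗)

To see this, write `h(x) = ∫_0^∞ e^{x-u} / ((1 + e^x) (1 + e^{x-u})) du`, whose integrand is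
`(1 / (1 + e^{x-u}) - 1 / (1 + e^x)) / (e^u - 1)`. By Tonelli and the beta integral
`∫ e^{a x} / (1 + e^x) dx = π / sin (π a)` (`lintegral_exp_div`), the left side of (∗) becomes
`π · ∫_0^∞ (e^{a u} - 1) / (e^u - 1) du`, and expanding numerator and denominator into series gives
the zeta values (`lintegral_bose`).

The left side of (∗) involves the moment generating function of the finite measure `h(x) dx`, which
is analytic at `0`, so (∗) holds as an identity of power series at `0`. The coefficient of `a^{2n}`,
computed on the left with the Leibniz rule, is a combination of the odd moments of `h`
(`sum_moments`), and this combination is the integral of `Q_n(x / π) h(x)` up to a constant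
(`Q_mul_wt`). All integrands in the proof of (∗) are nonnegative, so it is carried out with `∫⁻`. -/

open Real MeasureTheory

/-- The polynomial `Q_m(t) = ((-1)^m/(2m)) · ∑_{k=1}^m (-1)^k · C(2m, 2k-1) · t^{2k-1}`,
viewed as a function `ℝ → ℝ`. -/
noncomputable def Q (m : ℕ) (t : ℝ) : ℝ :=
  (-1) ^ m / (2 * m) *
    ∑ k ∈ Finset.Icc 1 m, (-1) ^ k * (Nat.choose (2 * m) (2 * k - 1) : ℝ) * t ^ (2 * k - 1)

/-! ### The beta integral on the logistic scale -/

/-- Euler's beta integral `B(a, 1 - a)` after the substitution `t = e^x / (1 + e^x)`. -/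
lemma lintegral_exp_div (a : ℝ) (h0 : 0 < a) (h1 : a < 1) :
    ∫⁻ x : ℝ, ENNReal.ofReal (exp (a * x) / (1 + exp x)) = ENNReal.ofReal (π / sin (π * a)) := by
  have hb : ProbabilityTheory.beta a (1 - a) = π / sin (π * a) := by
    rw [ProbabilityTheory.beta, Real.Gamma_mul_Gamma_one_sub]; simp
  have hbp : 0 < ProbabilityTheory.beta a (1 - a) :=
    ProbabilityTheory.beta_pos h0 (by linarith)
  have key := ProbabilityTheory.lintegral_betaPDF_eq_one h0 (sub_pos.2 h1)
  rw [ProbabilityTheory.lintegral_betaPDF, ← range_sigmoid, ← Set.image_univ,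
    lintegral_image_eq_lintegral_abs_deriv_mul MeasurableSet.univ
      (fun x _ => (hasDerivAt_sigmoid x).hasDerivWithinAt) sigmoid_injective.injOn,
    setLIntegral_univ] at key
  rw [← hb]
  have hpt : ∀ x : ℝ, ENNReal.ofReal (exp (a * x) / (1 + exp x)) =
      ENNReal.ofReal (ProbabilityTheory.beta a (1 - a)) *
      (ENNReal.ofReal |sigmoid x * (1 - sigmoid x)| *
        ENNReal.ofReal (1 / ProbabilityTheory.beta a (1 - a) * sigmoid x ^ (a - 1) *
          (1 - sigmoid x) ^ (1 - a - 1))) := by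
    intro x
    have hs0 := sigmoid_pos x
    have hs1 : 0 < 1 - sigmoid x := sub_pos.2 (sigmoid_lt_one x)
    rw [← ENNReal.ofReal_mul (abs_nonneg _), ← ENNReal.ofReal_mul hbp.le,
      abs_of_pos (mul_pos hs0 hs1)]
    congr 1
    have e1 : sigmoid x ^ (a - 1) = sigmoid x ^ a / sigmoid x := rpow_sub_one hs0.ne' a
    have e2 : (1 - sigmoid x) ^ (1 - a - 1) = ((1 - sigmoid x) ^ a)⁻¹ := by
      rw [← rpow_neg hs1.le]; congr 1; ring
    have e3 : sigmoid x = exp x * (1 - sigmoid x) := by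
      rw [← sigmoid_neg, sigmoid_def, sigmoid_def, neg_neg, exp_neg]; field_simp; ring
    have e4 : (1 - sigmoid x) = (1 + exp x)⁻¹ := by
      rw [← sigmoid_neg, sigmoid_def, neg_neg]
    have e5 : sigmoid x ^ a = exp (a * x) * (1 - sigmoid x) ^ a := by
      conv_lhs => rw [e3]
      rw [mul_rpow (exp_pos x).le hs1.le, ← exp_mul, mul_comm x a]
    have hp : 0 < (1 - sigmoid x) ^ a := rpow_pos_of_pos hs1 a
    rw [e1, e2, e5, div_eq_mul_inv, ← e4]
    field_simp
  simp_rw [hpt]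
  rw [lintegral_const_mul' _ _ ENNReal.ofReal_ne_top, key, mul_one]

lemma lintegral_exp_div_shift (a u : ℝ) (h0 : 0 < a) (h1 : a < 1) :
    ∫⁻ x : ℝ, ENNReal.ofReal (exp (a * x) / (1 + exp (x - u))) =
      ENNReal.ofReal (exp (a * u) * (π / sin (π * a))) := by
  have hpt : ∀ x : ℝ, ENNReal.ofReal (exp (a * x) / (1 + exp (x - u))) =
      ENNReal.ofReal (exp (a * u)) *
        (fun y => ENNReal.ofReal (exp (a * y) / (1 + exp y))) (x - u) := by
    intro x
    simp only
    rw [← ENNReal.ofReal_mul (exp_pos _).le, ← mul_div_assoc, ← exp_add]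
    congr 4; ring
  simp_rw [hpt]
  rw [lintegral_const_mul' _ _ ENNReal.ofReal_ne_top,
    lintegral_sub_right_eq_self (fun y => ENNReal.ofReal (exp (a * y) / (1 + exp y))) u,
    lintegral_exp_div a h0 h1, ENNReal.ofReal_mul (exp_pos _).le]

/-! ### The double integral -/

/-- `e^{a x}` times the kernel whose integral over `u > 0` is `log (1 + e^x) / (1 + e^x)`. -/
noncomputable def ker (a x u : ℝ) : ℝ :=
  exp (a * x) * (exp (x - u) / ((1 + exp x) * (1 + exp (x - u))))

lemma ker_nonneg (a x u : ℝ) : 0 ≤ ker a x u := by unfold ker; positivity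

/-- The kernel is `e^{a x} (1 / (1 + e^{x-u}) - 1 / (1 + e^x)) / (e^u - 1)`, so its integral is a
difference of two beta integrals. -/
lemma lintegral_ker_left (a u : ℝ) (h0 : 0 < a) (h1 : a < 1) (hu : 0 < u) :
    ∫⁻ x : ℝ, ENNReal.ofReal (ker a x u) =
      ENNReal.ofReal (π / sin (π * a)) * ENNReal.ofReal ((exp (a * u) - 1) / (exp u - 1)) := by
  have hE : 0 < exp u - 1 := by have := add_one_lt_exp hu.ne'; linarith
  have hs : 0 < sin (π * a) := sin_pos_of_pos_of_lt_pi (by positivity) (by nlinarith [pi_pos])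
  have hc : 0 < π / sin (π * a) := by positivity
  have hE' : 0 ≤ exp (a * u) - 1 := by
    have := add_one_le_exp (a * u); nlinarith [mul_pos h0 hu]
  -- In `ℝ≥0∞` subtraction truncates, so the partial fraction identity is used in additive form.
  have hsum : ∫⁻ x : ℝ, ENNReal.ofReal (exp (a * x) / (1 + exp (x - u))) =
      ENNReal.ofReal (exp u - 1) * (∫⁻ x : ℝ, ENNReal.ofReal (ker a x u)) +
      ∫⁻ x : ℝ, ENNReal.ofReal (exp (a * x) / (1 + exp x)) := by
    rw [← lintegral_const_mul' _ _ ENNReal.ofReal_ne_top, ← lintegral_add_right _ (by fun_prop)]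
    refine lintegral_congr fun x => ?_
    rw [← ENNReal.ofReal_mul hE.le, ← ENNReal.ofReal_add (mul_nonneg hE.le (ker_nonneg _ _ _))
      (by positivity)]
    congr 1
    have : exp x = exp (x - u) * exp u := by rw [← exp_add]; congr 1; ring
    unfold ker
    rw [this]
    have := exp_pos u
    have := exp_pos (x - u)
    field_simp
    ring
  rw [lintegral_exp_div_shift a u h0 h1, lintegral_exp_div a h0 h1] at hsum
  have h2 : ENNReal.ofReal (exp u - 1) * (∫⁻ x : ℝ, ENNReal.ofReal (ker a x u)) =
      ENNReal.ofReal ((exp (a * u) - 1) * (π / sin (π * a))) := by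
    have h3 : ENNReal.ofReal (exp (a * u) * (π / sin (π * a))) =
        ENNReal.ofReal ((exp (a * u) - 1) * (π / sin (π * a))) +
          ENNReal.ofReal (π / sin (π * a)) := by
      rw [← ENNReal.ofReal_add (mul_nonneg hE' hc.le) hc.le]; congr 1; ring
    rw [h3] at hsum
    exact ((ENNReal.add_left_inj ENNReal.ofReal_ne_top).1 hsum).symm
  have h4 : ENNReal.ofReal (exp u - 1) *
      (ENNReal.ofReal (π / sin (π * a)) * ENNReal.ofReal ((exp (a * u) - 1) / (exp u - 1))) =
      ENNReal.ofReal ((exp (a * u) - 1) * (π / sin (π * a))) := by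
    rw [← ENNReal.ofReal_mul hc.le, ← ENNReal.ofReal_mul hE.le]
    congr 1; field_simp
  rw [← h4] at h2
  exact (ENNReal.mul_right_inj (by simpa using hE) ENNReal.ofReal_ne_top).1 h2

lemma lintegral_ker_right (a x : ℝ) :
    ∫⁻ u in Set.Ioi (0 : ℝ), ENNReal.ofReal (ker a x u) =
      ENNReal.ofReal (exp (a * x) * (log (1 + exp x) / (1 + exp x))) := by
  set g : ℝ → ℝ := fun u => -(exp (a * x) / (1 + exp x)) * log (1 + exp (x - u)) with hg
  have hd : ∀ u ∈ Set.Ici (0 : ℝ), HasDerivAt g (ker a x u) u := by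
    intro u _
    have h1 : HasDerivAt (fun u : ℝ => log (1 + exp (x - u))) (exp (x - u) * (-1) / (1 + exp (x - u))) u :=
      ((((hasDerivAt_id u).const_sub x).exp).const_add 1).log (by positivity)
    refine (h1.const_mul (-(exp (a * x) / (1 + exp x)))).congr_deriv ?_
    unfold ker
    field_simp
  have hpos : ∀ u ∈ Set.Ioi (0 : ℝ), 0 ≤ ker a x u := fun u _ => ker_nonneg _ _ _
  have ht : Filter.Tendsto g Filter.atTop (nhds 0) := by
    have h1 : Filter.Tendsto (fun u : ℝ => exp (x - u)) Filter.atTop (nhds 0) :=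
      tendsto_exp_atBot.comp (Filter.tendsto_atBot_add_const_left _ x Filter.tendsto_neg_atTop_atBot)
    have h2 : Filter.Tendsto (fun u : ℝ => log (1 + exp (x - u))) Filter.atTop (nhds (log (1 + 0))) :=
      (h1.const_add 1).log (by norm_num)
    simpa [hg] using h2.const_mul (-(exp (a * x) / (1 + exp x)))
  rw [← ofReal_integral_eq_lintegral_ofReal (integrableOn_Ioi_deriv_of_nonneg' hd hpos ht)
    (Filter.Eventually.of_forall fun u => ker_nonneg _ _ _),
    integral_Ioi_of_hasDerivAt_of_nonneg' hd hpos ht]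
  congr 1
  simp only [hg, sub_zero]
  ring

/-! ### Zeta values from the Bose integral -/

/-- The real number `ζ(j + 2)`, as a series over `k + 1 ≥ 1`. -/
noncomputable def zc (j : ℕ) : ℝ := ∑' k : ℕ, 1 / ((k : ℝ) + 1) ^ (j + 2)

lemma summable_zc (j : ℕ) : Summable fun k : ℕ => 1 / ((k : ℝ) + 1) ^ (j + 2) := by
  have := (summable_nat_add_iff 1).2 (Real.summable_one_div_nat_pow.2 (show 1 < j + 2 by omega))
  simpa using this

lemma zc_nonneg (j : ℕ) : 0 ≤ zc j := tsum_nonneg fun k => by positivity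

lemma lintegral_pow_mul_exp (j k : ℕ) :
    ∫⁻ u in Set.Ioi (0 : ℝ), ENNReal.ofReal (u ^ (j + 1) / (j + 1).factorial * exp (-((k + 1) * u)))
      = ENNReal.ofReal (1 / ((k : ℝ) + 1) ^ (j + 2)) := by
  have hk : (0 : ℝ) < k + 1 := by positivity
  have hI : ∫ u in Set.Ioi (0 : ℝ), u ^ (j + 1) / (j + 1).factorial * exp (-((k + 1) * u)) =
      1 / ((k : ℝ) + 1) ^ (j + 2) := by
    have h := integral_rpow_mul_exp_neg_mul_Ioi (a := ((j + 1 : ℕ) : ℝ) + 1) (by positivity) hk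
    rw [Gamma_nat_eq_factorial] at h
    simp only [add_sub_cancel_right, rpow_natCast] at h
    have e : (fun u : ℝ => u ^ (j + 1) / (j + 1).factorial * exp (-((k + 1) * u))) =
        fun u : ℝ => (1 / ((j + 1).factorial : ℝ)) * (u ^ (j + 1) * exp (-((k + 1) * u))) := by
      funext u; ring
    have e' : (1 / ((k : ℝ) + 1)) ^ (((j + 1 : ℕ) : ℝ) + 1) = 1 / ((k : ℝ) + 1) ^ (j + 2) := by
      rw [← Nat.cast_add_one (j + 1), rpow_natCast, one_div_pow]
    rw [e, integral_const_mul, h, e']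
    have : ((j + 1).factorial : ℝ) ≠ 0 := by positivity
    field_simp
  rw [← hI, ofReal_integral_eq_lintegral_ofReal]
  · refine Integrable.of_integral_ne_zero ?_
    rw [hI]; positivity
  · filter_upwards [ae_restrict_mem measurableSet_Ioi] with u hu
    have : (0 : ℝ) < u := hu
    simp only [Pi.zero_apply]
    positivity

/-- `(e^{a u} - 1) / (e^u - 1) = ∑_{j, k ≥ 0} (a u)^{j+1} / (j+1)! · e^{-(k+1) u}` has nonnegative
terms and can be integrated term by term. -/
lemma lintegral_bose (a : ℝ) (h0 : 0 < a) :
    ∫⁻ u in Set.Ioi (0 : ℝ), ENNReal.ofReal ((exp (a * u) - 1) / (exp u - 1)) =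
      ∑' j : ℕ, ENNReal.ofReal (a ^ (j + 1) * zc j) := by
  have hpt : ∀ u ∈ Set.Ioi (0 : ℝ), ENNReal.ofReal ((exp (a * u) - 1) / (exp u - 1)) =
      ∑' j : ℕ, ∑' k : ℕ, ENNReal.ofReal (a ^ (j + 1)) *
        ENNReal.ofReal (u ^ (j + 1) / (j + 1).factorial * exp (-((k + 1) * u))) := by
    intro u hu
    have hu : 0 < u := hu
    have hE : 0 < exp u - 1 := by have := add_one_lt_exp hu.ne'; linarith
    have s1 : HasSum (fun j : ℕ => (a * u) ^ (j + 1) / (j + 1).factorial) (exp (a * u) - 1) := by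
      have := (hasSum_nat_add_iff' 1).2 (NormedSpace.expSeries_div_hasSum_exp (a * u))
      rw [← Real.exp_eq_exp_ℝ] at this
      simpa using this
    have s2 : HasSum (fun k : ℕ => exp (-((k + 1) * u))) (exp u - 1)⁻¹ := by
      have hlt : exp (-u) < 1 := by simpa using hu
      have := (hasSum_geometric_of_lt_one (exp_pos (-u)).le hlt).mul_left (exp (-u))
      have e1 : (fun k : ℕ => exp (-((k + 1) * u))) = fun k : ℕ => exp (-u) * exp (-u) ^ k := by
        funext k
        rw [← exp_nat_mul, ← exp_add]; congr 1; ring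
      have e2 : (exp u - 1)⁻¹ = exp (-u) * (1 - exp (-u))⁻¹ := by
        rw [exp_neg, ← mul_inv, mul_sub, mul_one, mul_inv_cancel₀ (exp_pos u).ne']
      rw [e1, e2]
      exact this
    rw [div_eq_mul_inv, ENNReal.ofReal_mul' (by positivity), ← s1.tsum_eq, ← s2.tsum_eq,
      ENNReal.ofReal_tsum_of_nonneg (fun j => by positivity) s1.summable,
      ENNReal.ofReal_tsum_of_nonneg (fun j => by positivity) s2.summable, ← ENNReal.tsum_mul_right]
    refine tsum_congr fun j => ?_
    rw [← ENNReal.tsum_mul_left]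
    refine tsum_congr fun k => ?_
    rw [← ENNReal.ofReal_mul (by positivity), ← ENNReal.ofReal_mul (by positivity)]
    congr 1
    rw [mul_pow]; ring
  rw [setLIntegral_congr_fun measurableSet_Ioi hpt, lintegral_tsum (fun j => by fun_prop)]
  refine tsum_congr fun j => ?_
  rw [lintegral_tsum (fun j => by fun_prop), ENNReal.ofReal_mul (by positivity), zc,
    ENNReal.ofReal_tsum_of_nonneg (fun j => by positivity) (summable_zc j), ← ENNReal.tsum_mul_left]
  refine tsum_congr fun k => ?_
  rw [lintegral_const_mul' _ _ ENNReal.ofReal_ne_top, lintegral_pow_mul_exp]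

lemma zc_le (j : ℕ) : zc j ≤ zc 0 :=
  (summable_zc j).tsum_le_tsum (fun k => by
    apply one_div_le_one_div_of_le (by positivity)
    exact pow_le_pow_right₀ (by linarith [(Nat.cast_nonneg k : (0:ℝ) ≤ k)]) (by omega)) (summable_zc 0)

lemma summable_zc_pow (a : ℝ) (ha : |a| < 1) : Summable fun j : ℕ => a ^ (j + 1) * zc j := by
  have h := ((summable_geometric_of_lt_one (abs_nonneg a) ha).mul_right (|a| * zc 0))
  refine Summable.of_norm_bounded h fun j => ?_
  rw [norm_mul, norm_pow, Real.norm_eq_abs, Real.norm_eq_abs, abs_of_nonneg (zc_nonneg j), pow_succ, mul_assoc]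
  gcongr
  exact zc_le j

/-- The generating function identity, with both sides in `ℝ≥0∞`; since the right side is finite it
also shows that the integrand on the left is integrable. -/
lemma lintegral_mgf (a : ℝ) (h0 : 0 < a) (h1 : a < 1) :
    ∫⁻ x : ℝ, ENNReal.ofReal (exp (a * x) * (log (1 + exp x) / (1 + exp x))) =
      ENNReal.ofReal (π / sin (π * a) * ∑' j : ℕ, a ^ (j + 1) * zc j) := by
  have hs : 0 < sin (π * a) := sin_pos_of_pos_of_lt_pi (by positivity) (by nlinarith [pi_pos])
  simp_rw [← lintegral_ker_right]
  rw [lintegral_lintegral_swap (by unfold ker Function.uncurry; fun_prop),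
    setLIntegral_congr_fun measurableSet_Ioi (fun u hu => lintegral_ker_left a u h0 h1 hu),
    lintegral_const_mul' _ _ ENNReal.ofReal_ne_top, lintegral_bose a h0,
    ENNReal.ofReal_mul (by positivity), ENNReal.ofReal_tsum_of_nonneg
      (fun j => mul_nonneg (by positivity) (zc_nonneg j)) (summable_zc_pow a (by rwa [abs_of_pos h0]))]


/-! ### Analyticity of the generating function -/

/-- The weight `log (1 + e^x) / (1 + e^x)`. -/
noncomputable def wt (x : ℝ) : ℝ := log (1 + exp x) / (1 + exp x)

lemma wt_nonneg (x : ℝ) : 0 ≤ wt x :=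
  div_nonneg (log_nonneg (by linarith [exp_pos x])) (by positivity)

@[fun_prop]
lemma measurable_wt : Measurable wt := by unfold wt; fun_prop

/-- The finite measure with density `wt`. -/
noncomputable def wtMeasure : Measure ℝ := volume.withDensity fun x => ENNReal.ofReal (wt x)

lemma integral_wtMeasure (g : ℝ → ℝ) : ∫ x, g x ∂wtMeasure = ∫ x, wt x * g x := by
  have := integral_withDensity_eq_integral_smul (μ := volume) (f := fun x => (wt x).toNNReal)
    (by fun_prop) g
  simpa [NNReal.smul_def, wt_nonneg, wtMeasure, ENNReal.ofReal] using this

lemma integrable_wtMeasure (g : ℝ → ℝ) :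
    Integrable g wtMeasure ↔ Integrable fun x => wt x * g x := by
  have := integrable_withDensity_iff_integrable_smul (μ := volume) (f := fun x => (wt x).toNNReal)
    (by fun_prop) (g := g)
  simpa [NNReal.smul_def, wt_nonneg, wtMeasure, ENNReal.ofReal] using this

lemma integrable_of_lintegral {f : ℝ → ℝ} (hf : Measurable f) (h0 : ∀ x, 0 ≤ f x) {c : ℝ}
    (h : ∫⁻ x, ENNReal.ofReal (f x) = ENNReal.ofReal c) : Integrable f :=
  (lintegral_ofReal_ne_top_iff_integrable hf.aestronglyMeasurable (Filter.Eventually.of_forall h0)).1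
    (by rw [h]; exact ENNReal.ofReal_ne_top)

/-- Exponential integrability at `1/2` comes from `lintegral_mgf`, and at `-1/2` from the bound
`wt x ≤ e^x / (1 + e^x)`; the set of such exponents is convex. -/
lemma zero_mem_interior :
    (0 : ℝ) ∈ interior (ProbabilityTheory.integrableExpSet (id : ℝ → ℝ) wtMeasure) := by
  have hp : (1 / 2 : ℝ) ∈ ProbabilityTheory.integrableExpSet (id : ℝ → ℝ) wtMeasure := by
    refine (integrable_wtMeasure _).2 ?_
    refine (integrable_of_lintegral (by fun_prop) (fun x => ?_)
      (lintegral_mgf (1 / 2) (by norm_num) (by norm_num))).congr ?_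
    · exact mul_nonneg (exp_pos _).le (wt_nonneg x)
    · exact Filter.Eventually.of_forall fun x => mul_comm _ _
  have hm : (-(1 / 2) : ℝ) ∈ ProbabilityTheory.integrableExpSet (id : ℝ → ℝ) wtMeasure := by
    refine (integrable_wtMeasure _).2 ?_
    refine (integrable_of_lintegral (by fun_prop) (fun x => ?_)
      (lintegral_exp_div (1 / 2) (by norm_num) (by norm_num))).mono'
        (by unfold wt; fun_prop) (Filter.Eventually.of_forall fun x => ?_)
    · positivity
    · rw [Real.norm_of_nonneg (mul_nonneg (wt_nonneg x) (exp_pos _).le)]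
      have h1 : wt x ≤ exp x / (1 + exp x) := by
        unfold wt
        gcongr
        have := log_le_sub_one_of_pos (show 0 < 1 + exp x by positivity)
        linarith
      calc wt x * exp (-(1 / 2) * id x) ≤ exp x / (1 + exp x) * exp (-(1 / 2) * id x) := by gcongr
        _ = exp (1 / 2 * x) / (1 + exp x) := by
          rw [div_mul_eq_mul_div, ← exp_add]; congr 2; simp only [id]; ring
  have hsub : Set.Icc (-(1 / 2) : ℝ) (1 / 2) ⊆
      ProbabilityTheory.integrableExpSet (id : ℝ → ℝ) wtMeasure :=
    (ProbabilityTheory.convex_integrableExpSet.ordConnected).out hm hp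
  exact mem_interior_iff_mem_nhds.2
    (Filter.mem_of_superset (Icc_mem_nhds (by norm_num) (by norm_num)) hsub)

/-- The moment generating function `a ↦ ∫ e^{a x} wt x dx`. -/
noncomputable def M (a : ℝ) : ℝ := ProbabilityTheory.mgf (id : ℝ → ℝ) wtMeasure a

lemma M_eq (a : ℝ) (h0 : 0 < a) (h1 : a < 1) :
    M a = π / sin (π * a) * ∑' j : ℕ, a ^ (j + 1) * zc j := by
  have hs : 0 < sin (π * a) := sin_pos_of_pos_of_lt_pi (by positivity) (by nlinarith [pi_pos])
  rw [M, ProbabilityTheory.mgf, integral_wtMeasure,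
    integral_eq_lintegral_of_nonneg_ae (Filter.Eventually.of_forall fun x =>
      mul_nonneg (wt_nonneg x) (exp_pos _).le) (by fun_prop)]
  simp_rw [mul_comm (wt _)]
  refine (congrArg ENNReal.toReal (lintegral_mgf a h0 h1)).trans (ENNReal.toReal_ofReal ?_)
  exact mul_nonneg (by positivity) (tsum_nonneg fun j => mul_nonneg (by positivity) (zc_nonneg j))

lemma hasFPowerSeriesAt_series :
    HasFPowerSeriesAt (fun a : ℝ => π * ∑' j : ℕ, a ^ (j + 1) * zc j)
      (FormalMultilinearSeries.ofScalars ℝ fun j : ℕ => if j = 0 then 0 else π * zc (j - 1)) 0 := by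
  rw [hasFPowerSeriesAt_iff]
  filter_upwards [Metric.ball_mem_nhds (0 : ℝ) one_pos] with z hz
  have hz : |z| < 1 := by simpa using hz
  simp only [zero_add, FormalMultilinearSeries.coeff_ofScalars, smul_eq_mul]
  refine (hasSum_nat_add_iff' 1).1 ?_
  simp only [Finset.range_one, Finset.sum_singleton, if_true, mul_zero, sub_zero,
    Nat.add_eq_zero_iff, one_ne_zero, and_false, if_false, Nat.add_sub_cancel]
  have h := (summable_zc_pow z hz).hasSum.mul_left π
  simp_rw [mul_left_comm π] at h
  exact h

lemma analyticAt_M : AnalyticAt ℝ M 0 := ProbabilityTheory.analyticAt_mgf zero_mem_interior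

/-- Both sides of `sin (π a) M(a) = π ∑ ζ(j + 1) a^j` are analytic at `0` and agree for `0 < a < 1`,
hence have the same Taylor coefficients at `0`. -/
lemma iteratedDeriv_sin_mul_M (m : ℕ) (hm : 1 ≤ m) :
    iteratedDeriv m ((fun a => sin (π * a)) * M) 0 = m.factorial * (π * zc (m - 1)) := by
  have hsin : AnalyticAt ℝ (fun a => sin (π * a)) 0 := by fun_prop
  have hA : AnalyticAt ℝ ((fun a => sin (π * a)) * M) 0 := hsin.mul analyticAt_M
  have hS := hasFPowerSeriesAt_series
  have hev := (hA.frequently_eq_iff_eventually_eq hS.analyticAt).1 (by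
    have : ∀ᶠ a in nhdsWithin (0 : ℝ) (Set.Ioi 0), ((fun a => sin (π * a)) * M) a =
        π * ∑' j : ℕ, a ^ (j + 1) * zc j := by
      filter_upwards [Ioo_mem_nhdsGT (one_pos : (0:ℝ) < 1)] with a ha
      have hs : 0 < sin (π * a) :=
        sin_pos_of_pos_of_lt_pi (mul_pos pi_pos ha.1) (by nlinarith [pi_pos, ha.2])
      rw [Pi.mul_apply, M_eq a ha.1 ha.2]
      field_simp
    exact this.frequently.filter_mono (nhdsWithin_mono _ fun x hx => ne_of_gt hx))
  have heq := hA.hasFPowerSeriesAt.eq_formalMultilinearSeries_of_eventually hS hev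
  have hc := congrFun ((FormalMultilinearSeries.ofScalars_series_eq_iff ℝ _ _).1 heq) m
  rw [if_neg (by omega), div_eq_iff (by positivity)] at hc
  rw [hc, mul_comm]

lemma integrable_moment (k : ℕ) : Integrable fun x => wt x * x ^ k :=
  (integrable_wtMeasure _).1 (by
    simpa using ProbabilityTheory.integrable_pow_of_mem_interior_integrableExpSet zero_mem_interior k)

/-! ### Comparison of Taylor coefficients -/

lemma iteratedDeriv_M (k : ℕ) : iteratedDeriv k M 0 = ∫ x, wt x * x ^ k := by
  have := ProbabilityTheory.iteratedDeriv_mgf_zero zero_mem_interior k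
  rw [integral_wtMeasure] at this
  exact this

lemma iteratedDeriv_sin_pi (i : ℕ) :
    iteratedDeriv i (fun a => sin (π * a)) 0 =
      if Even i then 0 else π ^ i * (-1) ^ (i / 2) := by
  rw [iteratedDeriv_comp_const_mul contDiff_sin]
  obtain ⟨k, rfl | rfl⟩ := i.even_or_odd'
  · simp
  · simp [Nat.mul_add_div]

lemma sum_range_odd_terms (f : ℕ → ℝ) (hf : ∀ k, f (2 * k) = 0) (n : ℕ) :
    ∑ i ∈ Finset.range (2 * n + 1), f i = ∑ k ∈ Finset.range n, f (2 * k + 1) := by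
  induction n with
  | zero => simpa using hf 0
  | succ n ih =>
    rw [show 2 * (n + 1) + 1 = 2 * n + 1 + 1 + 1 by ring, Finset.sum_range_succ,
      Finset.sum_range_succ, ih, Finset.sum_range_succ, show 2 * n + 1 + 1 = 2 * (n + 1) by ring,
      hf, add_zero]

/-- The Leibniz rule for the `2n`-th derivative of `sin (π a) M(a)` at `0`. -/
lemma sum_moments (n : ℕ) (hn : 1 ≤ n) :
    ∑ k ∈ Finset.range n, ((2 * n).choose (2 * k + 1) : ℝ) * (π ^ (2 * k + 1) * (-1) ^ k) *
      (∫ x, wt x * x ^ (2 * n - (2 * k + 1))) = (2 * n).factorial * (π * zc (2 * n - 1)) := by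
  rw [← iteratedDeriv_sin_mul_M _ (by omega), iteratedDeriv_mul
    (by fun_prop) analyticAt_M.contDiffAt]
  simp_rw [iteratedDeriv_sin_pi, iteratedDeriv_M]
  rw [sum_range_odd_terms _ (fun k => by simp)]
  refine Finset.sum_congr rfl fun k _ => ?_
  simp [Nat.mul_add_div]

lemma riemannZeta_eq_zc (n : ℕ) (hn : 1 ≤ n) :
    riemannZeta (2 * n + 1) = (zc (2 * n - 1) : ℂ) := by
  have h := zeta_nat_eq_tsum_of_gt_one (k := 2 * n + 1) (by omega)
  have hs : Summable fun m : ℕ => 1 / (m : ℝ) ^ (2 * n + 1) :=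
    Real.summable_one_div_nat_pow.2 (by omega)
  have hz : zc (2 * n - 1) = ∑' m : ℕ, 1 / (m : ℝ) ^ (2 * n + 1) := by
    rw [hs.tsum_eq_zero_add, zc, show 2 * n - 1 + 2 = 2 * n + 1 by omega]
    simp
  rw [hz, Complex.ofReal_tsum]
  push_cast at h ⊢
  exact h

/-- The binomial expansion of `Q_n(x / π)`, reindexed to match the Leibniz sum in `sum_moments`. -/
lemma Q_mul_wt (n : ℕ) (hn : 1 ≤ n) (x : ℝ) :
    Q n (x / π) * log (1 + exp x) / (1 + exp x) =
      ∑ k ∈ Finset.range n, (2 * n * π ^ (2 * n))⁻¹ *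
        (((2 * n).choose (2 * k + 1) : ℝ) * (π ^ (2 * k + 1) * (-1) ^ k)) *
          (wt x * x ^ (2 * n - (2 * k + 1))) := by
  rw [mul_div_assoc, ← wt, Q, Finset.mul_sum, Finset.sum_mul]
  -- The substitution `k ↦ n - k` turns the exponent `2k - 1` into `2n - (2k + 1)`.
  refine Finset.sum_bij' (fun k _ => n - k) (fun k _ => n - k) ?_ ?_ ?_ ?_ ?_
  · intro k hk; simp only [Finset.mem_Icc, Finset.mem_range] at *; omega
  · intro k hk; simp only [Finset.mem_Icc, Finset.mem_range] at *; omega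
  · intro k hk; simp only [Finset.mem_Icc] at *; omega
  · intro k hk; simp only [Finset.mem_range] at *; omega
  · intro k hk
    obtain ⟨h1, h2⟩ := Finset.mem_Icc.1 hk
    obtain ⟨d, rfl⟩ := Nat.exists_eq_add_of_le h2
    have e1 : 2 * (k + d) - (2 * (k + d - k) + 1) = 2 * k - 1 := by omega
    have e2 : (2 * (k + d)).choose (2 * (k + d - k) + 1) = (2 * (k + d)).choose (2 * k - 1) :=
      Nat.choose_symm_of_eq_add (by omega)
    have e3 : π ^ (2 * (k + d)) = π ^ (2 * d + 1) * π ^ (2 * k - 1) := by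
      rw [← pow_add]; congr 1; omega
    have e4 : ((-1 : ℝ) ^ (k + d)) * (-1) ^ k = (-1) ^ d := by
      rw [← pow_add, show k + d + k = 2 * k + d by ring, pow_add, pow_mul]; simp
    rw [e1, e2, e3, div_pow, Nat.add_sub_cancel_left, ← e4]
    have : ((k + d : ℕ) : ℝ) ≠ 0 := by exact_mod_cast (by omega : k + d ≠ 0)
    have := pi_pos
    field_simp


/-- For every natural number `n ≥ 1`,
`ζ(2n+1) = (π^{2n-1}/(2n-1)!) · ∫_{-∞}^{∞} Q_n(x/π)·log(1+e^x)/(1+e^x) dx`. -/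
theorem zeta_odd_eq_integral_Q (n : ℕ) (hn : 1 ≤ n) :
    riemannZeta (2 * n + 1) =
      ((π ^ (2 * n - 1) / (Nat.factorial (2 * n - 1)) *
        ∫ x : ℝ, Q n (x / π) * Real.log (1 + Real.exp x) / (1 + Real.exp x) : ℝ) : ℂ) := by
  rw [riemannZeta_eq_zc n hn]
  congr 1
  simp_rw [Q_mul_wt n hn]
  rw [integral_finsetSum _ fun k _ => (integrable_moment _).const_mul _]
  simp_rw [integral_const_mul, mul_assoc ((2 * n * π ^ (2 * n) : ℝ)⁻¹)]
  rw [← Finset.mul_sum, sum_moments n hn]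
  obtain ⟨m, hm⟩ : ∃ m, 2 * n = m + 1 := ⟨2 * n - 1, by omega⟩
  have hc : (2 * n : ℝ) = m + 1 := by exact_mod_cast hm
  rw [hc, hm, Nat.add_sub_cancel, Nat.factorial_succ, pow_succ]
  have := pi_pos
  have : (m.factorial : ℝ) ≠ 0 := by positivity
  push_cast
  field_simp
end

section
/- For every natural number n ≥ 1, ζ(2n+1) = (1 / (2n-1)!) · ∫_{-∞}^{∞} (∏_{k=-(n-1)}^{n-1} (x - π·tan(kπ/(2n)))) · log(1 + e^x) / (1 + e^x) dx. -/
/-!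
Write `f x = log (1 + e^x) / (1 + e^x)` and `G t = ∫ e^(tx) f x dx`, the moment generating function
of the measure `f x dx`, which is finite for `-1 < t < 1`.

Since `f x = ∫_0^1 e^x / ((1 + e^x) (1 + v e^x)) dv`, Fubini, partial fractions and the beta
integral `∫ e^(ax) / (1 + e^x) dx = π / sin (πa)` give, for `0 < b < 1`,
`G (-b) = π / sin (πb) · ∫_0^1 (1 - v^b) / (1 - v) dv` (`integral_exp_mul_log_eq`). Expanding
`1 / (1 - v)` geometrically, the last integral is
`∑_{m ≥ 1} b / (m (m + b)) = - ∑_{k ≥ 1} ζ(k+1) (-b)^k` (`hasSum_integral_one_sub_rpow`,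
`sum_zetaCoeff_neg`). By the identity theorem `sin (πz) G z = π ∑_{k ≥ 1} ζ(k+1) z^k` for complex
`z` near `0` (`sin_mul_complexMGF_eventuallyEq`).

On the other hand, the product in the statement equals
`((x + iπ)^(2n) - (x - iπ)^(2n)) / (4nπi)` (`prod_tan_eq`), and `∫ (x ± iπ)^(2n) f x dx` is the
`2n`-th derivative at `0` of `e^(± iπz) G z` (`iteratedDeriv_exp_mul_complexMGF`). So the integral
in the statement is `1 / (2nπ)` times the `2n`-th derivative of `sin (πz) G z` at `0`, that is,
`(2n)! ζ(2n+1) / (2n) = (2n-1)! ζ(2n+1)`.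
-/

open Real MeasureTheory

/-! ### The product as a difference of two powers -/

lemma node_mem_Ioo {n : ℕ} {k : ℤ}
    (hk : k ∈ Finset.Icc (-(n : ℤ) + 1) ((n : ℤ) - 1)) :
    (k * π / (2 * n) : ℝ) ∈ Set.Ioo (-(π / 2)) (π / 2) := by
  rw [Finset.mem_Icc] at hk
  have hn : (0 : ℝ) < n := by
    have : (0 : ℤ) < n := by omega
    exact_mod_cast this
  have h1 : (-(n : ℝ)) < k := by
    have : (-(n : ℤ)) < k := by omega
    exact_mod_cast this
  have h2 : (k : ℝ) < n := by
    have : k < (n : ℤ) := by omega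
    exact_mod_cast this
  have := Real.pi_pos
  constructor
  · rw [lt_div_iff₀ (by positivity)]
    nlinarith
  · rw [div_lt_iff₀ (by positivity)]
    nlinarith

/-- The numbers `π tan (kπ / 2n)` solve `(x + iπ)^(2n) = (x - iπ)^(2n)`, because
`sin θ ± i cos θ = ± i exp (∓ iθ)`. -/
lemma node_pow_eq {n : ℕ} {k : ℤ}
    (hk : k ∈ Finset.Icc (-(n : ℤ) + 1) ((n : ℤ) - 1)) :
    (((π * Real.tan (k * π / (2 * n)) : ℝ) : ℂ) + Complex.I * π) ^ (2 * n) =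
      (((π * Real.tan (k * π / (2 * n)) : ℝ) : ℂ) - Complex.I * π) ^ (2 * n) := by
  have hn : (n : ℂ) ≠ 0 := by
    rw [Finset.mem_Icc] at hk
    have : n ≠ 0 := by omega
    exact_mod_cast this
  have hc : Real.cos (k * π / (2 * n)) ≠ 0 :=
    (Real.cos_pos_of_mem_Ioo (node_mem_Ioo hk)).ne'
  set θ : ℝ := k * π / (2 * n) with hθ
  have hc' : (Real.cos θ : ℂ) ≠ 0 := by exact_mod_cast hc
  have e1 : (((π * Real.tan θ : ℝ) : ℂ) + Complex.I * π) =
      π / Real.cos θ * (Complex.I * Complex.exp (-(θ * Complex.I))) := by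
    rw [Real.tan_eq_sin_div_cos, ← neg_mul, Complex.exp_mul_I]
    push_cast at hc' ⊢
    rw [Complex.cos_neg, Complex.sin_neg]
    field_simp
    linear_combination (Complex.sin θ) * Complex.I_sq
  have e2 : (((π * Real.tan θ : ℝ) : ℂ) - Complex.I * π) =
      π / Real.cos θ * (-Complex.I * Complex.exp (θ * Complex.I)) := by
    rw [Real.tan_eq_sin_div_cos, Complex.exp_mul_I]
    push_cast at hc' ⊢
    field_simp
    linear_combination (Complex.sin θ) * Complex.I_sq
  have e3 : Complex.exp (-(θ * Complex.I)) ^ (2 * n) =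
      Complex.exp (θ * Complex.I) ^ (2 * n) := by
    rw [← Complex.exp_nat_mul, ← Complex.exp_nat_mul, Complex.exp_eq_exp_iff_exists_int]
    refine ⟨-k, ?_⟩
    rw [hθ]
    push_cast
    field_simp
    ring
  rw [e1, e2, mul_pow, mul_pow, mul_pow, mul_pow, e3, (even_two_mul n).neg_pow]

open Polynomial in
/-- Both sides are polynomials in `x` of degree at most `2n - 1` with the same coefficient at
`x^(2n-1)`, and they agree at the `2n - 1` nodes `π tan (kπ / 2n)`. -/
lemma prod_tan_eq (n : ℕ) (hn : 1 ≤ n) (x : ℝ) :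
    (4 * n * π * Complex.I : ℂ) *
      ((∏ k ∈ Finset.Icc (-(n : ℤ) + 1) ((n : ℤ) - 1),
            (x - π * Real.tan (k * π / (2 * n))) : ℝ) : ℂ) =
      ((x : ℂ) + Complex.I * π) ^ (2 * n) - ((x : ℂ) - Complex.I * π) ^ (2 * n) := by
  set s := Finset.Icc (-(n : ℤ) + 1) ((n : ℤ) - 1) with hs
  have hcard : s.card = 2 * n - 1 := by
    rw [hs, Int.card_Icc]; omega
  set v : ℤ → ℂ := fun k => ((π * Real.tan (k * π / (2 * n)) : ℝ) : ℂ) with hv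
  set P : ℂ[X] := ∏ k ∈ s, (X - C (v k)) with hP
  set Q : ℂ[X] := (X + C (Complex.I * π)) ^ (2 * n) - (X + C (-(Complex.I * π))) ^ (2 * n) with hQ
  have hPmonic : P.Monic := monic_prod_of_monic _ _ fun k _ => monic_X_sub_C _
  have hPdeg : P.natDegree = 2 * n - 1 := by
    rw [hP, natDegree_prod_of_monic _ _ fun k _ => monic_X_sub_C _]
    simp [hcard]
  have hinj : Set.InjOn v s := by
    intro a ha b hb hab
    have h1 : π * Real.tan (a * π / (2 * n)) = π * Real.tan (b * π / (2 * n)) :=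
      Complex.ofReal_injective hab
    have h2 := Real.injOn_tan (node_mem_Ioo ha) (node_mem_Ioo hb)
      (mul_left_cancel₀ Real.pi_ne_zero h1)
    have hn' : (n : ℝ) ≠ 0 := by positivity
    field_simp at h2
    exact_mod_cast h2
  have key : C (4 * n * π * Complex.I : ℂ) * P = Q := by
    refine eq_of_degree_sub_lt_of_eval_index_eq s hinj ?_ ?_
    · rw [hcard, degree_lt_iff_coeff_zero]
      intro m hm
      rw [coeff_sub, coeff_C_mul, hQ, coeff_sub, coeff_X_add_C_pow, coeff_X_add_C_pow]
      rcases hm.eq_or_lt with rfl | hm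
      · rw [← hPdeg, hPmonic.coeff_natDegree, hPdeg]
        have e : 2 * n - (2 * n - 1) = 1 := by omega
        have e' : (2 * n).choose (2 * n - 1) = 2 * n := by
          rw [← Nat.choose_symm_of_eq_add (a := 1) (by omega), Nat.choose_one_right]
        rw [e, e']
        push_cast
        ring
      · rw [coeff_eq_zero_of_natDegree_lt (by omega)]
        have e : 2 * n - m = 0 := by omega
        simp [e]
    · intro k hk
      have h0 : P.eval (v k) = 0 := by
        rw [hP, eval_prod]
        exact Finset.prod_eq_zero hk (by simp)
      rw [eval_mul, h0, mul_zero, hQ]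
      simp only [eval_sub, eval_pow, eval_add, eval_X, eval_C]
      rw [← sub_eq_add_neg, eq_comm, sub_eq_zero]
      exact node_pow_eq hk
  have := congrArg (eval (x : ℂ)) key
  rw [hP, hQ] at this
  simp only [eval_mul, eval_C, eval_prod, eval_sub, eval_pow, eval_add, eval_X] at this
  rw [← sub_eq_add_neg] at this
  rw [← this, hv]
  push_cast
  rfl

/-! ### The beta integral on the real line -/

/-- Under the substitution `s = sigmoid x`, which maps `ℝ` onto `(0, 1)`, the integrand of the beta
integral `B(a, 1 - a)` becomes `exp (a x) / (1 + exp x)`. -/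
lemma abs_deriv_sigmoid_smul (a x : ℝ) :
    |sigmoid x * (1 - sigmoid x)| •
      ((sigmoid x : ℂ) ^ ((a : ℂ) - 1) * (1 - (sigmoid x : ℂ)) ^ ((1 - a : ℂ) - 1)) =
      ((rexp (a * x) / (1 + rexp x) : ℝ) : ℂ) := by
  have h0 := sigmoid_pos x
  have h1 : 0 < 1 - sigmoid x := sub_pos.2 (sigmoid_lt_one x)
  have e1 : (sigmoid x : ℂ) ^ ((a : ℂ) - 1) = ((sigmoid x ^ (a - 1) : ℝ) : ℂ) := by
    rw [Complex.ofReal_cpow h0.le]; push_cast; rfl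
  have e2 : (1 - (sigmoid x : ℂ)) ^ ((1 - a : ℂ) - 1) =
      (((1 - sigmoid x) ^ (-a) : ℝ) : ℂ) := by
    rw [Complex.ofReal_cpow h1.le]; push_cast; congr 1; ring
  rw [e1, e2, abs_of_pos (mul_pos h0 h1), Complex.real_smul, ← Complex.ofReal_mul,
    ← Complex.ofReal_mul]
  congr 1
  have e3 : sigmoid x = rexp x * (1 - sigmoid x) := by
    rw [sigmoid_def, Real.exp_neg]
    have := Real.exp_pos x
    field_simp
    ring
  have e4 : 1 - sigmoid x = (1 + rexp x)⁻¹ := by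
    rw [← sigmoid_neg, sigmoid_def, neg_neg]
  have hE : 0 < 1 + rexp x := by positivity
  rw [Real.rpow_sub_one h0.ne', Real.rpow_neg h1.le]
  have e5 : sigmoid x ^ a = rexp (a * x) * (1 - sigmoid x) ^ a := by
    conv_lhs => rw [e3]
    rw [Real.mul_rpow (Real.exp_pos x).le h1.le, ← Real.exp_mul, mul_comm x a]
  have h2 : (1 - sigmoid x) ^ a ≠ 0 := (Real.rpow_pos_of_pos h1 a).ne'
  rw [e5, div_eq_mul_inv (rexp (a * x)) (1 + rexp x), ← e4]
  field_simp

lemma integrable_exp_mul_div {a : ℝ} (h0 : 0 < a) (h1 : a < 1) :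
    Integrable (fun x : ℝ => rexp (a * x) / (1 + rexp x)) := by
  have h := Complex.betaIntegral_convergent (u := a) (v := 1 - a) (by simpa) (by simpa)
  rw [intervalIntegrable_iff_integrableOn_Ioo_of_le zero_le_one, ← range_sigmoid,
    ← Set.image_univ, integrableOn_image_iff_integrableOn_abs_deriv_smul MeasurableSet.univ
      (fun x _ => (hasDerivAt_sigmoid x).hasDerivWithinAt) sigmoid_injective.injOn] at h
  simp only [abs_deriv_sigmoid_smul, integrableOn_univ] at h
  exact_mod_cast h.re

lemma integral_exp_mul_div {a : ℝ} (h0 : 0 < a) (h1 : a < 1) :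
    ∫ x : ℝ, rexp (a * x) / (1 + rexp x) = π / Real.sin (π * a) := by
  have h := Complex.betaIntegral_eq_Gamma_mul_div a (1 - a) (by simpa) (by simpa)
  rw [Complex.Gamma_mul_Gamma_one_sub, add_sub_cancel, Complex.Gamma_one, div_one,
    Complex.betaIntegral, intervalIntegral.integral_of_le zero_le_one,
    integral_Ioc_eq_integral_Ioo, ← range_sigmoid, ← Set.image_univ,
    integral_image_eq_integral_abs_deriv_smul MeasurableSet.univ
      (fun x _ => (hasDerivAt_sigmoid x).hasDerivWithinAt) sigmoid_injective.injOn] at h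
  simp only [abs_deriv_sigmoid_smul, setIntegral_univ] at h
  rw [integral_complex_ofReal] at h
  exact_mod_cast h

/-! ### The moment generating function of the density -/

/-- The second term of the partial fractions is `v ^ b` times a translate by `log v` of the integrand
in `integral_exp_mul_div`, so its integral follows from that lemma. -/
lemma scaled_integrand_eq {v : ℝ} (hv : 0 < v) (b x : ℝ) :
    v * rexp ((1 - b) * x) / (1 + v * rexp x) =
      v ^ b * (rexp ((1 - b) * (x + Real.log v)) / (1 + rexp (x + Real.log v))) := by
  rw [mul_add, Real.exp_add, Real.exp_add, Real.exp_log hv, mul_comm (1 - b) (Real.log v),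
    ← Real.rpow_def_of_pos hv, Real.rpow_sub hv, Real.rpow_one]
  have := Real.rpow_pos_of_pos hv b
  have h2 : 0 < 1 + v * rexp x := by positivity
  rw [mul_comm (rexp x) v]
  field_simp

/-- The kernel whose integral over `v ∈ (0, 1)` is `exp (-b x) log (1 + e^x) / (1 + e^x)`. -/
noncomputable def kernel (b v x : ℝ) : ℝ :=
  rexp ((1 - b) * x) / ((1 + rexp x) * (1 + v * rexp x))

/-- Partial fractions for the kernel. -/
lemma kernel_eq {v : ℝ} (hv : v ∈ Set.Ioo (0 : ℝ) 1) (b x : ℝ) :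
    kernel b v x = (1 - v)⁻¹ * (rexp ((1 - b) * x) / (1 + rexp x) -
      v ^ b * (rexp ((1 - b) * (x + Real.log v)) / (1 + rexp (x + Real.log v)))) := by
  rw [← scaled_integrand_eq hv.1, kernel]
  have h1 : 1 - v ≠ 0 := (sub_pos.2 hv.2).ne'
  have h2 : 1 + v * rexp x ≠ 0 := by have := hv.1; positivity
  have h3 : 1 + rexp x ≠ 0 := by positivity
  rw [div_sub_div _ _ h3 h2, inv_mul_eq_div, div_div, div_eq_div_iff (mul_ne_zero h3 h2)
    (mul_ne_zero (mul_ne_zero h3 h2) h1)]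
  ring

lemma kernel_nonneg {v : ℝ} (hv : v ∈ Set.Ioo (0 : ℝ) 1) (b x : ℝ) : 0 ≤ kernel b v x := by
  have := hv.1
  unfold kernel
  positivity

lemma integrable_kernel {b v : ℝ} (h0 : 0 < b) (h1 : b < 1) (hv : v ∈ Set.Ioo (0 : ℝ) 1) :
    Integrable (kernel b v) := by
  rw [funext (kernel_eq hv b)]
  have h := integrable_exp_mul_div (a := 1 - b) (by linarith) (by linarith)
  exact (h.sub ((h.comp_add_right (Real.log v)).const_mul _)).const_mul _

lemma integral_kernel {b v : ℝ} (h0 : 0 < b) (h1 : b < 1) (hv : v ∈ Set.Ioo (0 : ℝ) 1) :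
    ∫ x, kernel b v x = π / Real.sin (π * b) * ((1 - v ^ b) / (1 - v)) := by
  rw [funext (kernel_eq hv b)]
  have h := integrable_exp_mul_div (a := 1 - b) (by linarith) (by linarith)
  have hi := integral_exp_mul_div (a := 1 - b) (by linarith) (by linarith)
  rw [integral_const_mul, integral_sub h ((h.comp_add_right (Real.log v)).const_mul _),
    integral_const_mul,
    integral_add_right_eq_self (fun x : ℝ => rexp ((1 - b) * x) / (1 + rexp x)), hi,
    show π * (1 - b) = π - π * b by ring, Real.sin_pi_sub]
  ring

lemma integral_kernel_left (b x : ℝ) :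
    ∫ v in Set.Ioo (0 : ℝ) 1, kernel b v x =
      rexp (-b * x) * (Real.log (1 + rexp x) / (1 + rexp x)) := by
  have hE := Real.exp_pos x
  have key : ∫ v in (0 : ℝ)..1, kernel b v x =
      rexp (-b * x) * Real.log (1 + 1 * rexp x) / (1 + rexp x) -
      rexp (-b * x) * Real.log (1 + 0 * rexp x) / (1 + rexp x) := by
    have hpos : ∀ v ∈ Set.uIcc (0 : ℝ) 1, 0 < 1 + v * rexp x := by
      intro v hv
      rw [Set.uIcc_of_le zero_le_one] at hv
      have := hv.1
      positivity
    refine intervalIntegral.integral_eq_sub_of_hasDerivAt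
      (f := fun v => rexp (-b * x) * Real.log (1 + v * rexp x) / (1 + rexp x))
      (fun v hv => ?_) ?_
    · have h1 := ((((hasDerivAt_id v).mul_const (rexp x)).const_add 1).log
        (hpos v hv).ne').const_mul (rexp (-b * x)) |>.div_const (1 + rexp x)
      refine h1.congr_deriv ?_
      have := hpos v hv
      have e : rexp ((1 - b) * x) = rexp (-b * x) * rexp x := by
        rw [← Real.exp_add]; ring_nf
      simp only [kernel, e, id]
      field_simp
    · refine ContinuousOn.intervalIntegrable ?_
      unfold kernel
      refine ContinuousOn.div (by fun_prop) (by fun_prop) fun v hv => ?_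
      have := hpos v hv
      positivity
  rw [← integral_Ioc_eq_integral_Ioo, ← intervalIntegral.integral_of_le zero_le_one, key]
  simp
  ring

lemma one_sub_rpow_div_mem {b v : ℝ} (h0 : 0 < b) (h1 : b < 1) (hv : v ∈ Set.Ioo (0 : ℝ) 1) :
    (1 - v ^ b) / (1 - v) ∈ Set.Icc (0 : ℝ) 1 := by
  have h2 : 0 < 1 - v := sub_pos.2 hv.2
  have h3 : v ^ b ≤ 1 := Real.rpow_le_one hv.1.le hv.2.le h0.le
  have h4 : v ≤ v ^ b := by
    simpa using Real.rpow_le_rpow_of_exponent_ge hv.1 hv.2.le h1.le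
  exact ⟨div_nonneg (by linarith) h2.le, (div_le_one h2).2 (by linarith)⟩

lemma integrableOn_one_sub_rpow_div {b : ℝ} (h0 : 0 < b) (h1 : b < 1) :
    IntegrableOn (fun v : ℝ => (1 - v ^ b) / (1 - v)) (Set.Ioo 0 1) := by
  refine Measure.integrableOn_of_bounded (M := 1) (by simp)
    (by measurability : Measurable _).aestronglyMeasurable ?_
  rw [ae_restrict_iff' measurableSet_Ioo]
  refine ae_of_all _ fun v hv => ?_
  have := one_sub_rpow_div_mem h0 h1 hv
  rw [Real.norm_eq_abs, abs_of_nonneg this.1]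
  exact this.2

lemma integral_exp_mul_log_eq {b : ℝ} (h0 : 0 < b) (h1 : b < 1) :
    ∫ x : ℝ, rexp (-b * x) * (Real.log (1 + rexp x) / (1 + rexp x)) =
      π / Real.sin (π * b) * ∫ v in Set.Ioo (0 : ℝ) 1, (1 - v ^ b) / (1 - v) := by
  have hI : Integrable (Function.uncurry (kernel b))
      ((volume.restrict (Set.Ioo (0 : ℝ) 1)).prod volume) := by
    have hm : Measurable (Function.uncurry (kernel b)) := by
      unfold kernel Function.uncurry
      fun_prop
    rw [integrable_prod_iff hm.aestronglyMeasurable, ae_restrict_iff' measurableSet_Ioo]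
    refine ⟨ae_of_all _ fun v hv => integrable_kernel h0 h1 hv, ?_⟩
    refine ((integrableOn_one_sub_rpow_div h0 h1).const_mul (π / Real.sin (π * b))).congr ?_
    rw [Filter.EventuallyEq, ae_restrict_iff' measurableSet_Ioo]
    refine ae_of_all _ fun v hv => ?_
    rw [← integral_kernel h0 h1 hv]
    refine integral_congr_ae (ae_of_all _ fun x => ?_)
    exact (Real.norm_of_nonneg (kernel_nonneg hv b x)).symm
  have hswap := integral_integral_swap hI
  simp only [integral_kernel_left] at hswap
  rw [← hswap, ← integral_const_mul]
  exact setIntegral_congr_fun measurableSet_Ioo fun v hv => integral_kernel h0 h1 hv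

lemma summable_inv_sq : Summable fun m : ℕ => 1 / ((m : ℝ) + 1) ^ 2 := by
  have := (summable_nat_add_iff 1).2 (Real.summable_one_div_nat_pow.2 one_lt_two)
  exact_mod_cast this

lemma hasSum_integral_one_sub_rpow {b : ℝ} (h0 : 0 < b) (h1 : b < 1) :
    HasSum (fun m : ℕ => b / (((m : ℝ) + 1) * (m + 1 + b)))
      (∫ v in Set.Ioo (0 : ℝ) 1, (1 - v ^ b) / (1 - v)) := by
  have hint : ∀ m : ℕ, IntegrableOn (fun v : ℝ => v ^ m * (1 - v ^ b)) (Set.Ioo 0 1) := by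
    intro m
    have hc : Continuous fun v : ℝ => v ^ m * (1 - v ^ b) := by
      have := Real.continuous_rpow_const h0.le
      fun_prop
    exact (hc.integrableOn_Icc (a := 0) (b := 1)).mono_set Set.Ioo_subset_Icc_self
  have hval : ∀ m : ℕ, ∫ v in Set.Ioo (0 : ℝ) 1, v ^ m * (1 - v ^ b) =
      b / (((m : ℝ) + 1) * (m + 1 + b)) := by
    intro m
    have e : ∫ v in Set.Ioo (0 : ℝ) 1, v ^ m * (1 - v ^ b) =
        ∫ v in Set.Ioo (0 : ℝ) 1, (v ^ (m : ℝ) - v ^ (m + b)) := by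
      refine setIntegral_congr_fun measurableSet_Ioo fun v hv => ?_
      rw [Real.rpow_add hv.1, Real.rpow_natCast]
      ring
    have hm : (-1 : ℝ) < m := by linarith [m.cast_nonneg (α := ℝ)]
    rw [e, ← integral_Ioc_eq_integral_Ioo, ← intervalIntegral.integral_of_le zero_le_one,
      intervalIntegral.integral_sub (intervalIntegral.intervalIntegrable_rpow' hm)
        (intervalIntegral.intervalIntegrable_rpow' (by linarith)),
      integral_rpow (Or.inl hm), integral_rpow (Or.inl (by linarith))]
    have hm2 : (0 : ℝ) < m + 1 := by linarith
    have hm3 : (0 : ℝ) < m + b + 1 := by linarith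
    have hm4 : (0 : ℝ) < m + 1 + b := by linarith
    rw [Real.one_rpow, Real.one_rpow, Real.zero_rpow hm2.ne', Real.zero_rpow hm3.ne']
    field_simp
    ring
  have hnorm : ∀ m : ℕ, ∫ v in Set.Ioo (0 : ℝ) 1, ‖v ^ m * (1 - v ^ b)‖ =
      b / (((m : ℝ) + 1) * (m + 1 + b)) := by
    intro m
    rw [← hval m]
    refine setIntegral_congr_fun measurableSet_Ioo fun v hv => ?_
    have h3 : v ^ b ≤ 1 := Real.rpow_le_one hv.1.le hv.2.le h0.le
    exact Real.norm_of_nonneg (mul_nonneg (pow_nonneg hv.1.le _) (by linarith))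
  have hs : Summable fun m : ℕ => b / (((m : ℝ) + 1) * (m + 1 + b)) := by
    refine Summable.of_nonneg_of_le (fun m => by positivity) (fun m => ?_) summable_inv_sq
    have hm : (0 : ℝ) ≤ m := m.cast_nonneg
    rw [div_le_div_iff₀ (by positivity) (by positivity)]
    nlinarith
  have h := hasSum_integral_of_summable_integral_norm hint (by simpa only [hnorm] using hs)
  simp only [hval] at h
  have hgeom : ∫ v in Set.Ioo (0 : ℝ) 1, ∑' m : ℕ, v ^ m * (1 - v ^ b) =
      ∫ v in Set.Ioo (0 : ℝ) 1, (1 - v ^ b) / (1 - v) := by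
    refine setIntegral_congr_fun measurableSet_Ioo fun v hv => ?_
    rw [tsum_mul_right, tsum_geometric_of_lt_one hv.1.le hv.2, div_eq_inv_mul]
  rwa [hgeom] at h

/-- The density `log (1 + e^x) / (1 + e^x)` has exponential moments of every order in `(-1, 1)`. -/
lemma integrable_exp_mul_log {t : ℝ} (h0 : -1 < t) (h1 : t < 1) :
    Integrable fun x : ℝ => rexp (t * x) * (Real.log (1 + rexp x) / (1 + rexp x)) := by
  -- With `δ = (1 - t) / 2`, the bound `log (1 + u) ≤ u ^ δ / δ` leaves the exponent
  -- `t + δ = (1 + t) / 2`, which lies in `(0, 1)`.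
  set δ := (1 - t) / 2 with hδ
  have hδ0 : 0 < δ := by rw [hδ]; linarith
  have hδ1 : δ ≤ 1 := by rw [hδ]; linarith
  have hI := (integrable_exp_mul_div (a := t + δ) (by rw [hδ]; linarith)
    (by rw [hδ]; linarith)).const_mul δ⁻¹
  refine hI.mono' (by fun_prop) (ae_of_all _ fun x => ?_)
  have hE := Real.exp_pos x
  have hlog0 : 0 ≤ Real.log (1 + rexp x) := Real.log_nonneg (by linarith)
  have hlog : Real.log (1 + rexp x) ≤ δ⁻¹ * rexp (δ * x) := by
    have e : δ * Real.log (1 + rexp x) = Real.log ((1 + rexp x) ^ δ) :=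
      (Real.log_rpow (by positivity) δ).symm
    have e1 := Real.rpow_add_le_add_rpow zero_le_one hE.le hδ0.le hδ1
    rw [Real.one_rpow, ← Real.exp_mul, mul_comm x δ] at e1
    have e2 := Real.log_le_log (by positivity) e1
    have e3 := Real.log_le_sub_one_of_pos (x := 1 + rexp (δ * x)) (by positivity)
    rw [inv_mul_eq_div, le_div_iff₀ hδ0]
    linarith
  rw [Real.norm_of_nonneg (by positivity), add_mul, Real.exp_add]
  calc rexp (t * x) * (Real.log (1 + rexp x) / (1 + rexp x))
      ≤ rexp (t * x) * (δ⁻¹ * rexp (δ * x) / (1 + rexp x)) := by gcongr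
    _ = _ := by ring

/-! ### The zeta series and analytic continuation -/

/-- The coefficients of `∑_{k ≥ 1} ζ(k+1) z^k`. The constant coefficient is set to `0`, since
`ζ` has a pole at `1`. -/
noncomputable def zetaCoeff (k : ℕ) : ℂ := if k = 0 then 0 else riemannZeta (k + 1)

lemma zetaCoeff_succ (j : ℕ) : zetaCoeff (j + 1) = ∑' m : ℕ, 1 / ((m : ℂ) + 1) ^ (j + 2) := by
  have h := zeta_nat_eq_tsum_of_gt_one (k := j + 2) (by omega)
  have hs : Summable fun m : ℕ => 1 / (m : ℂ) ^ (j + 2) :=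
    Summable.of_norm (by simp)
  rw [hs.tsum_eq_zero_add] at h
  rw [zetaCoeff, if_neg (by omega)]
  push_cast at h ⊢
  rw [show (j : ℂ) + 1 + 1 = j + 2 by ring, h]
  simp

lemma norm_one_div_pow_le (m j : ℕ) :
    ‖1 / ((m : ℂ) + 1) ^ (j + 2)‖ ≤ 1 / ((m : ℝ) + 1) ^ 2 := by
  have e : ‖(m : ℂ) + 1‖ = m + 1 := by
    have := Complex.norm_natCast (m + 1)
    push_cast at this
    exact this
  rw [norm_div, norm_pow, e, norm_one]
  refine one_div_le_one_div_of_le (by positivity) ?_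
  exact pow_le_pow_right₀ (by linarith [m.cast_nonneg (α := ℝ)]) (by omega)

lemma norm_zetaCoeff_le (k : ℕ) : ‖zetaCoeff k‖ ≤ ∑' m : ℕ, 1 / ((m : ℝ) + 1) ^ 2 := by
  rcases k with _ | j
  · simp only [zetaCoeff, if_true, norm_zero]
    exact tsum_nonneg fun m => by positivity
  · rw [zetaCoeff_succ]
    exact tsum_of_norm_bounded summable_inv_sq.hasSum fun m => norm_one_div_pow_le m j

lemma hasFPowerSeriesOnBall_zetaCoeff :
    HasFPowerSeriesOnBall (FormalMultilinearSeries.ofScalars ℂ zetaCoeff).sum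
      (FormalMultilinearSeries.ofScalars ℂ zetaCoeff) 0
      (FormalMultilinearSeries.ofScalars ℂ zetaCoeff).radius := by
  refine FormalMultilinearSeries.hasFPowerSeriesOnBall _ (lt_of_lt_of_le zero_lt_one ?_)
  refine FormalMultilinearSeries.le_radius_of_bound (r := 1) _
    (∑' m : ℕ, 1 / ((m : ℝ) + 1) ^ 2) fun k => ?_
  rw [FormalMultilinearSeries.ofScalars_norm]
  simpa using norm_zetaCoeff_le k

/-- Interchange of the two sums in `∑_{k ≥ 1} ζ(k+1) (-b)^k`, whose inner sums over `k` are
geometric. -/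
lemma sum_zetaCoeff_neg {b : ℝ} (h0 : 0 < b) (h1 : b < 1) :
    (FormalMultilinearSeries.ofScalars ℂ zetaCoeff).sum ((-b : ℝ) : ℂ) =
      ((-∑' m : ℕ, b / (((m : ℝ) + 1) * (m + 1 + b)) : ℝ) : ℂ) := by
  have hb : ‖((-b : ℝ) : ℂ)‖ = b := by simp [abs_of_pos h0]
  set z : ℂ := ((-b : ℝ) : ℂ) with hz
  set F : ℕ → ℕ → ℂ := fun j m => z ^ (j + 1) * (1 / ((m : ℂ) + 1) ^ (j + 2)) with hF
  have hFs : Summable (Function.uncurry F) := by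
    have hg : Summable fun j : ℕ => b ^ (j + 1) :=
      (summable_nat_add_iff 1).2 (summable_geometric_of_lt_one h0.le h1)
    refine Summable.of_norm_bounded
      (hg.mul_of_nonneg summable_inv_sq (fun j => by positivity) fun m => by positivity) ?_
    rintro ⟨j, m⟩
    simp only [Function.uncurry, hF]
    rw [norm_mul, norm_pow, hb]
    exact mul_le_mul_of_nonneg_left (norm_one_div_pow_le m j) (by positivity)
  have hsum : (FormalMultilinearSeries.ofScalars ℂ zetaCoeff).sum z =
      ∑' j : ℕ, z ^ (j + 1) * zetaCoeff (j + 1) := by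
    have hS : Summable fun k : ℕ => zetaCoeff k * z ^ k := by
      refine Summable.of_norm_bounded ((summable_geometric_of_lt_one h0.le h1).mul_left
        (∑' m : ℕ, 1 / ((m : ℝ) + 1) ^ 2)) fun k => ?_
      rw [norm_mul, norm_pow, hb]
      exact mul_le_mul_of_nonneg_right (norm_zetaCoeff_le k) (by positivity)
    have := FormalMultilinearSeries.ofScalars_sum_eq (E := ℂ) zetaCoeff z
    rw [FormalMultilinearSeries.ofScalarsSum] at this
    rw [this]
    simp only [smul_eq_mul]
    rw [hS.tsum_eq_zero_add]
    simp [zetaCoeff, mul_comm]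
  have hgeo : ∀ m : ℕ, ∑' j : ℕ, F j m = ((-(b / (((m : ℝ) + 1) * (m + 1 + b))) : ℝ) : ℂ) := by
    intro m
    have hm1 : (m : ℂ) + 1 ≠ 0 := by exact_mod_cast m.succ_ne_zero
    have e : ∀ j, F j m = z / ((m : ℂ) + 1) ^ 2 * (z / ((m : ℂ) + 1)) ^ j := by
      intro j
      simp only [hF]
      rw [div_pow]
      field_simp
      ring
    have hlt : ‖z / ((m : ℂ) + 1)‖ < 1 := by
      have e : ‖(m : ℂ) + 1‖ = m + 1 := by
        have := Complex.norm_natCast (m + 1)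
        push_cast at this
        exact this
      rw [norm_div, hb, e, div_lt_one (by positivity)]
      linarith [m.cast_nonneg (α := ℝ)]
    simp only [e]
    rw [tsum_mul_left, tsum_geometric_of_norm_lt_one hlt]
    have hm2 : (m : ℂ) + 1 + b ≠ 0 := by
      have : (m : ℝ) + 1 + b ≠ 0 := by positivity
      exact_mod_cast this
    have hm3 : 1 - z / ((m : ℂ) + 1) = (m + 1 + b) / (m + 1) := by
      rw [hz]; push_cast; field_simp; ring
    rw [hm3, hz]
    push_cast
    field_simp
  rw [hsum]
  simp only [zetaCoeff_succ, ← tsum_mul_left]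
  rw [show ∑' (j : ℕ) (m : ℕ), z ^ (j + 1) * (1 / ((m : ℂ) + 1) ^ (j + 2)) =
    ∑' (m : ℕ) (j : ℕ), F j m from hFs.tsum_comm.symm]
  simp only [hgeo]
  rw [← Complex.ofReal_tsum, tsum_neg]

/-- The measure on `ℝ` with density `log (1 + e^x) / (1 + e^x)`. -/
noncomputable def logMeasure : Measure ℝ :=
  volume.withDensity fun x => ENNReal.ofReal (Real.log (1 + rexp x) / (1 + rexp x))

lemma density_nonneg (x : ℝ) : 0 ≤ Real.log (1 + rexp x) / (1 + rexp x) := by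
  have := Real.exp_pos x
  exact div_nonneg (Real.log_nonneg (by linarith)) (by linarith)

lemma measurable_density :
    Measurable fun x : ℝ => ENNReal.ofReal (Real.log (1 + rexp x) / (1 + rexp x)) := by
  fun_prop

lemma integral_logMeasure {E : Type*} [NormedAddCommGroup E] [NormedSpace ℝ E] (g : ℝ → E) :
    ∫ x, g x ∂logMeasure = ∫ x, (Real.log (1 + rexp x) / (1 + rexp x)) • g x := by
  rw [logMeasure, integral_withDensity_eq_integral_toReal_smul measurable_density (by simp)]
  simp only [ENNReal.toReal_ofReal (density_nonneg _)]

lemma mem_interior_integrableExpSet {t : ℝ} (h0 : -1 < t) (h1 : t < 1) :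
    t ∈ interior (ProbabilityTheory.integrableExpSet id logMeasure) := by
  refine mem_interior.2 ⟨Set.Ioo (-1) 1, fun s hs => ?_, isOpen_Ioo, h0, h1⟩
  rw [ProbabilityTheory.integrableExpSet, Set.mem_ofPred_eq, logMeasure,
    integrable_withDensity_iff_integrable_smul' measurable_density (by simp)]
  have := integrable_exp_mul_log hs.1 hs.2
  simp only [ENNReal.toReal_ofReal (density_nonneg _), smul_eq_mul, id]
  exact this.congr (ae_of_all _ fun x => mul_comm _ _)

/-- For `-1 < t < 0`, the moment generating function of `logMeasure` times `sin (πt)` is `π` times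
the zeta series. -/
lemma sin_mul_mgf_eq {b : ℝ} (h0 : 0 < b) (h1 : b < 1) :
    Complex.sin (π * ((-b : ℝ) : ℂ)) *
        ProbabilityTheory.complexMGF id logMeasure ((-b : ℝ) : ℂ) =
      π * (FormalMultilinearSeries.ofScalars ℂ zetaCoeff).sum ((-b : ℝ) : ℂ) := by
  have hs : Real.sin (π * b) ≠ 0 :=
    (Real.sin_pos_of_pos_of_lt_pi (by positivity) (by nlinarith [Real.pi_pos])).ne'
  have hm : ProbabilityTheory.mgf id logMeasure (-b) =
      π / Real.sin (π * b) * ∑' m : ℕ, b / (((m : ℝ) + 1) * (m + 1 + b)) := by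
    rw [(hasSum_integral_one_sub_rpow h0 h1).tsum_eq, ← integral_exp_mul_log_eq h0 h1,
      ProbabilityTheory.mgf, integral_logMeasure]
    simp only [smul_eq_mul, id, mul_comm]
  rw [sum_zetaCoeff_neg h0 h1, ProbabilityTheory.complexMGF_ofReal, hm, ← Complex.ofReal_mul,
    ← Complex.ofReal_sin, ← Complex.ofReal_mul, ← Complex.ofReal_mul, mul_neg, Real.sin_neg]
  congr 1
  field_simp

lemma analyticAt_complexMGF_zero :
    AnalyticAt ℂ (ProbabilityTheory.complexMGF id logMeasure) 0 :=
  ProbabilityTheory.analyticAt_complexMGF (by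
    simpa using mem_interior_integrableExpSet (t := 0) (by norm_num) (by norm_num))

/-- The identity theorem extends `sin_mul_mgf_eq` to a complex neighbourhood of `0`. -/
lemma sin_mul_complexMGF_eventuallyEq :
    (fun z : ℂ => Complex.sin (π * z) * ProbabilityTheory.complexMGF id logMeasure z)
      =ᶠ[nhds 0] fun z => π * (FormalMultilinearSeries.ofScalars ℂ zetaCoeff).sum z := by
  have hf : AnalyticAt ℂ
      (fun z : ℂ => Complex.sin (π * z) * ProbabilityTheory.complexMGF id logMeasure z) 0 := by
    refine AnalyticAt.mul ?_ analyticAt_complexMGF_zero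
    exact (by fun_prop : Differentiable ℂ fun z : ℂ => Complex.sin (π * z)).analyticAt 0
  have hg : AnalyticAt ℂ
      (fun z : ℂ => π * (FormalMultilinearSeries.ofScalars ℂ zetaCoeff).sum z) 0 :=
    analyticAt_const.mul hasFPowerSeriesOnBall_zetaCoeff.analyticAt
  refine (hf.frequently_eq_iff_eventually_eq hg).1 ?_
  have ht : Filter.Tendsto (fun b : ℝ => ((-b : ℝ) : ℂ)) (nhdsWithin 0 (Set.Ioi 0))
      (nhdsWithin 0 {0}ᶜ) := by
    refine tendsto_nhdsWithin_iff.2 ⟨?_, ?_⟩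
    · have : Continuous fun b : ℝ => ((-b : ℝ) : ℂ) := by fun_prop
      simpa using (this.tendsto 0).mono_left nhdsWithin_le_nhds
    · filter_upwards [self_mem_nhdsWithin] with b hb
      simpa using (ne_of_gt hb : b ≠ 0)
  refine ht.frequently (Filter.Eventually.frequently ?_)
  filter_upwards [Ioo_mem_nhdsGT (zero_lt_one' ℝ)] with b hb
  exact sin_mul_mgf_eq hb.1 hb.2

lemma iteratedDeriv_zeta_series (N : ℕ) :
    iteratedDeriv N (fun z : ℂ => π * (FormalMultilinearSeries.ofScalars ℂ zetaCoeff).sum z) 0 =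
      π * (N.factorial * zetaCoeff N) := by
  have hp := hasFPowerSeriesOnBall_zetaCoeff.hasFPowerSeriesAt
  have h := hp.analyticAt.hasFPowerSeriesAt.eq_formalMultilinearSeries hp
  have h2 := congrFun (FormalMultilinearSeries.ofScalars_series_injective ℂ ℂ h) N
  rw [iteratedDeriv_const_mul_field]
  rw [← h2]
  have : (N.factorial : ℂ) ≠ 0 := by exact_mod_cast N.factorial_ne_zero
  field_simp

/-! ### Taylor coefficients at the origin -/

/-- Multiplying the moment generating function by `exp (cz)` shifts the random variable by `c`. -/
lemma iteratedDeriv_exp_mul_complexMGF (c : ℂ) (N : ℕ) :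
    Integrable (fun x : ℝ => ((x : ℂ) + c) ^ N) logMeasure ∧
    iteratedDeriv N (fun z : ℂ => Complex.exp (c * z) *
      ProbabilityTheory.complexMGF id logMeasure z) 0 =
      ∫ x : ℝ, ((x : ℂ) + c) ^ N ∂logMeasure := by
  have h0 := mem_interior_integrableExpSet (t := 0) (by norm_num) (by norm_num)
  have hint : ∀ i : ℕ, Integrable (fun x : ℝ => (x : ℂ) ^ i) logMeasure := fun i => by
    have := (ProbabilityTheory.integrable_pow_of_mem_interior_integrableExpSet h0 i).ofReal (𝕜 := ℂ)
    simpa using this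
  have e : (fun x : ℝ => ((x : ℂ) + c) ^ N) = fun x : ℝ =>
      ∑ i ∈ Finset.range (N + 1), (N.choose i : ℂ) * c ^ i * (x : ℂ) ^ (N - i) := by
    funext x
    rw [add_comm, add_pow]
    exact Finset.sum_congr rfl fun i _ => by ring
  have hint2 : ∀ i ∈ Finset.range (N + 1),
      Integrable (fun x : ℝ => (N.choose i : ℂ) * c ^ i * (x : ℂ) ^ (N - i)) logMeasure :=
    fun i _ => (hint _).const_mul _
  rw [e]
  refine ⟨integrable_finsetSum _ hint2, ?_⟩
  rw [integral_finsetSum _ hint2]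
  have hexp : ContDiffAt ℂ N (fun z : ℂ => Complex.exp (c * z)) 0 := by fun_prop
  have := iteratedDeriv_mul hexp (analyticAt_complexMGF_zero.contDiffAt (n := N))
  refine this.trans (Finset.sum_congr rfl fun i _ => ?_)
  rw [integral_const_mul, iteratedDeriv_cexp_const_mul,
    ProbabilityTheory.iteratedDeriv_complexMGF (by simpa using h0)]
  simp

/-- For every natural number `n ≥ 1`,
`ζ(2n+1) = (1/(2n-1)!) · ∫_{-∞}^{∞} ∏_{k=-(n-1)}^{n-1} (x - π·tan(kπ/(2n)))
  · log(1+e^x)/(1+e^x) dx`. -/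
theorem zeta_odd_eq_integral_prod_tan (n : ℕ) (hn : 1 ≤ n) :
    riemannZeta (2 * n + 1) =
      ((1 / (Nat.factorial (2 * n - 1)) *
        ∫ x : ℝ,
          (∏ k ∈ Finset.Icc (-(n : ℤ) + 1) ((n : ℤ) - 1),
            (x - π * Real.tan (k * π / (2 * n)))) *
          Real.log (1 + Real.exp x) / (1 + Real.exp x) : ℝ) : ℂ) := by
  set P : ℝ → ℝ := fun x => ∏ k ∈ Finset.Icc (-(n : ℤ) + 1) ((n : ℤ) - 1),
    (x - π * Real.tan (k * π / (2 * n))) with hP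
  set M := ProbabilityTheory.complexMGF id logMeasure with hM
  obtain ⟨i1, d1⟩ := iteratedDeriv_exp_mul_complexMGF (Complex.I * π) (2 * n)
  obtain ⟨i2, d2⟩ := iteratedDeriv_exp_mul_complexMGF (-(Complex.I * π)) (2 * n)
  have hcd : ∀ c : ℂ, ContDiffAt ℂ (2 * n : ℕ) (fun z : ℂ => Complex.exp (c * z) * M z) 0 :=
    fun c => ContDiffAt.mul (by fun_prop) analyticAt_complexMGF_zero.contDiffAt
  have hsin : (fun z : ℂ => Complex.exp (Complex.I * π * z) * M z) -
      (fun z : ℂ => Complex.exp (-(Complex.I * π) * z) * M z) =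
      fun z => 2 * Complex.I * (Complex.sin (π * z) * M z) := by
    funext z
    have e := Complex.two_sin (π * z)
    rw [show -(π * z : ℂ) * Complex.I = -(Complex.I * π) * z by ring,
      show (π * z : ℂ) * Complex.I = Complex.I * π * z by ring] at e
    simp only [Pi.sub_apply]
    linear_combination (-Complex.I * M z) * e + (Complex.exp (Complex.I * π * z)
      - Complex.exp (-(Complex.I * π) * z)) * M z * Complex.I_sq
  have hD : 2 * Complex.I * (π * ((2 * n).factorial * zetaCoeff (2 * n))) =
      4 * n * π * Complex.I * ∫ x : ℝ, ((P x : ℝ) : ℂ) ∂logMeasure := by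
    rw [← iteratedDeriv_zeta_series,
      ← sin_mul_complexMGF_eventuallyEq.iteratedDeriv_eq (2 * n),
      ← iteratedDeriv_const_mul_field, ← hsin, iteratedDeriv_sub (hcd _) (hcd _), d1, d2,
      ← integral_sub i1 i2, ← integral_const_mul]
    refine integral_congr_ae (ae_of_all _ fun x => ?_)
    simp only
    rw [← sub_eq_add_neg]
    exact (prod_tan_eq n hn x).symm
  have hI : ∫ x : ℝ, ((P x : ℝ) : ℂ) ∂logMeasure =
      ((∫ x : ℝ, P x * Real.log (1 + rexp x) / (1 + rexp x) : ℝ) : ℂ) := by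
    rw [integral_complex_ofReal, integral_logMeasure]
    congr 2
    funext x
    rw [smul_eq_mul]
    ring
  have hz : zetaCoeff (2 * n) = riemannZeta (2 * n + 1) := by
    rw [zetaCoeff, if_neg (by omega)]
    push_cast
    rfl
  have hfac : ((2 * n).factorial : ℂ) = 2 * n * (2 * n - 1).factorial := by
    rw [← Nat.mul_factorial_pred (by omega : 2 * n ≠ 0)]
    push_cast
    rfl
  rw [hI, hz, hfac] at hD
  have hπ : (π : ℂ) ≠ 0 := by exact_mod_cast Real.pi_ne_zero
  have hn0 : (n : ℂ) ≠ 0 := by exact_mod_cast (by omega : n ≠ 0)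
  have hf0 : ((2 * n - 1).factorial : ℂ) ≠ 0 := by exact_mod_cast (2 * n - 1).factorial_ne_zero
  rw [Complex.ofReal_mul, Complex.ofReal_div, Complex.ofReal_one, Complex.ofReal_natCast,
    one_div, inv_mul_eq_div, eq_div_iff hf0]
  have hc : (4 * n * π * Complex.I : ℂ) ≠ 0 :=
    mul_ne_zero (mul_ne_zero (mul_ne_zero (by norm_num) hn0) hπ) Complex.I_ne_zero
  refine mul_left_cancel₀ hc ?_
  rw [← hD]
  ring
end

section
/- For every natural number n ≥ 1, the set of real roots of Q_n is exactly { tan(kπ/(2n)) : -(n-1) ≤ k ≤ n-1 }; equivalently, Q_n(t) = ∏_{k=-(n-1)}^{n-1} (t - tan(kπ/(2n))) as polynomials. -/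
/-!
The de Moivre identity drives the proof: by the binomial theorem the sum defining `Q n t` is
`-Im ((1 + t i) ^ (2n))` (`im_one_add_mul_I_pow`), and for `t = tan θ` with `cos θ ≠ 0` one has
`1 + t i = e^{iθ} / cos θ`, so this imaginary part vanishes as soon as `2nθ ∈ πℤ`
(`Q_tan_eq_zero`). The `2n - 1` angles `kπ/(2n)` with `|k| ≤ n - 1` lie in `(-π/2, π/2)`, where
`tan` is injective, so they give `2n - 1` distinct roots. As `Q n` is the evaluation of a monic polynomial
of degree `2n - 1` (`exists_polynomial_Q`), it coincides with the nodal polynomial of these roots.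
-/

open Real

lemma sum_range_two_mul_succ {M : Type*} [AddCommMonoid M] (f : ℕ → M) (m : ℕ) :
    ∑ j ∈ Finset.range (2 * m + 1), f j =
      ∑ k ∈ Finset.range m, (f (2 * k) + f (2 * k + 1)) + f (2 * m) := by
  induction m with
  | zero => simp
  | succ m ih =>
    rw [show 2 * (m + 1) + 1 = 2 * m + 1 + 1 + 1 by ring, Finset.sum_range_succ,
      Finset.sum_range_succ, ih, Finset.sum_range_succ, show 2 * (m + 1) = 2 * m + 1 + 1 by ring]
    abel

/-- The sum in the definition of `Q`, indexed from zero. -/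
lemma Q_eq_sum_range (m : ℕ) (t : ℝ) :
    Q m t = (-1) ^ m / (2 * m) *
      ∑ k ∈ Finset.range m, (-1) ^ (k + 1) * (Nat.choose (2 * m) (2 * k + 1) : ℝ) *
        t ^ (2 * k + 1) := by
  unfold Q
  congr 1
  rw [← Finset.Ico_add_one_right_eq_Icc, Finset.sum_Ico_eq_sum_range]
  refine Finset.sum_congr (by simp) fun k _ => ?_
  rw [show 2 * (1 + k) - 1 = 2 * k + 1 by omega, add_comm 1 k]

/-- Only the odd powers of `t i` contribute to the imaginary part of the binomial expansion. -/
lemma im_one_add_mul_I_pow (m : ℕ) (t : ℝ) :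
    ((1 + t * Complex.I) ^ (2 * m)).im =
      -∑ k ∈ Finset.range m, (-1) ^ (k + 1) * (Nat.choose (2 * m) (2 * k + 1) : ℝ) *
        t ^ (2 * k + 1) := by
  have even (k : ℕ) : ((t * Complex.I) ^ (2 * k) * (Nat.choose (2 * m) (2 * k) : ℂ)).im = 0 := by
    have : (t * Complex.I) ^ (2 * k) * (Nat.choose (2 * m) (2 * k) : ℂ) =
        ((t ^ (2 * k) * (-1) ^ k * Nat.choose (2 * m) (2 * k) : ℝ) : ℂ) := by
      rw [mul_pow, pow_mul Complex.I, Complex.I_sq]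
      push_cast
      ring
    rw [this, Complex.ofReal_im]
  have odd (k : ℕ) : ((t * Complex.I) ^ (2 * k + 1) *
      (Nat.choose (2 * m) (2 * k + 1) : ℂ)).im =
        -((-1) ^ (k + 1) * (Nat.choose (2 * m) (2 * k + 1) : ℝ) * t ^ (2 * k + 1)) := by
    have : (t * Complex.I) ^ (2 * k + 1) * (Nat.choose (2 * m) (2 * k + 1) : ℂ) =
        ((-((-1) ^ (k + 1) * (Nat.choose (2 * m) (2 * k + 1) : ℝ) * t ^ (2 * k + 1)) : ℝ) : ℂ) *
          Complex.I := by
      rw [mul_pow, pow_succ Complex.I, pow_mul Complex.I, Complex.I_sq]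
      push_cast
      ring
    rw [this, Complex.im_ofReal_mul, Complex.I_im, mul_one]
  rw [add_comm, add_pow]
  simp only [one_pow, mul_one]
  rw [sum_range_two_mul_succ, Complex.add_im, even, Complex.im_sum, add_zero,
    ← Finset.sum_neg_distrib]
  exact Finset.sum_congr rfl fun k _ => by rw [Complex.add_im, even, odd, zero_add]

lemma Q_eq_im (m : ℕ) (t : ℝ) :
    Q m t = -((-1) ^ m / (2 * m) * ((1 + t * Complex.I) ^ (2 * m)).im) := by
  rw [im_one_add_mul_I_pow, Q_eq_sum_range]
  ring

lemma Q_tan_eq_zero {m : ℕ} {θ : ℝ} (hc : Real.cos θ ≠ 0) (hs : Real.sin (2 * m * θ) = 0) :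
    Q m (Real.tan θ) = 0 := by
  have hc' : Complex.cos θ ≠ 0 := by exact_mod_cast hc
  have h : (1 + (Real.tan θ : ℂ) * Complex.I) ^ (2 * m) =
      (((Real.cos θ ^ (2 * m))⁻¹ : ℝ) : ℂ) *
        ((Real.cos (2 * m * θ) : ℂ) + (Real.sin (2 * m * θ) : ℂ) * Complex.I) := by
    have hb : 1 + (Real.tan θ : ℂ) * Complex.I =
        (Complex.cos θ)⁻¹ * (Complex.cos θ + Complex.sin θ * Complex.I) := by
      rw [Complex.ofReal_tan, Complex.tan_eq_sin_div_cos]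
      field_simp
    rw [hb, mul_pow, Complex.cos_add_sin_mul_I_pow]
    push_cast
    rw [inv_pow]
  rw [Q_eq_im, h, hs, Complex.im_ofReal_mul, Complex.ofReal_zero, zero_mul, add_zero,
    Complex.ofReal_im, mul_zero, mul_zero, neg_zero]

open Polynomial in
/-- `Q (m + 1)` is the evaluation of a monic polynomial of degree `2m + 1`: the prefactor
`(-1) ^ (m + 1) / (2m + 2)` cancels the top coefficient `(-1) ^ (m + 1) * (2m + 2)` of the sum. -/
lemma exists_polynomial_Q (m : ℕ) :
    ∃ p : ℝ[X], p.Monic ∧ p.degree = (2 * m + 1 : ℕ) ∧ ∀ t, p.eval t = Q (m + 1) t := by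
  let r : ℝ[X] := ∑ k ∈ Finset.range m,
    C ((-1) ^ (m + 1) / (2 * (m + 1 : ℕ)) *
      ((-1) ^ (k + 1) * (Nat.choose (2 * (m + 1)) (2 * k + 1) : ℝ))) * X ^ (2 * k + 1)
  have hr : r.degree < (2 * m + 1 : ℕ) := by
    rw [← mem_degreeLT]
    refine Submodule.sum_mem _ fun k hk => mem_degreeLT.2 ?_
    refine (degree_C_mul_X_pow_le _ _).trans_lt ?_
    have := Finset.mem_range.1 hk
    exact_mod_cast (by omega : 2 * k + 1 < 2 * m + 1)
  refine ⟨X ^ (2 * m + 1) + r, monic_X_pow_add hr,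
    by rw [degree_add_eq_left_of_degree_lt (by rwa [degree_X_pow]), degree_X_pow], fun t => ?_⟩
  have htop : (-1 : ℝ) ^ (m + 1) / (2 * (m + 1 : ℕ)) *
      ((-1) ^ (m + 1) * (Nat.choose (2 * (m + 1)) (2 * m + 1) : ℝ)) = 1 := by
    rw [show 2 * (m + 1) = 2 * m + 1 + 1 by ring, Nat.choose_succ_self_right]
    have h1 : (-1 : ℝ) ^ (m + 1) * (-1) ^ (m + 1) = 1 := by
      rw [← mul_pow]; simp
    have h2 : (m : ℝ) + 1 ≠ 0 := by positivity
    push_cast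
    field_simp
    linear_combination (2 * (m : ℝ) + 2) * h1
  rw [Q_eq_sum_range, Finset.sum_range_succ, mul_add, ← mul_assoc _ (_ * _) (t ^ (2 * m + 1)),
    htop, one_mul, Finset.mul_sum, add_comm]
  simp only [r, eval_add, eval_pow, eval_X, eval_finsetSum, eval_mul, eval_C, mul_assoc]

/-- For every natural number `n ≥ 1`,
`Q_n(t) = ∏_{k=-(n-1)}^{n-1} (t - tan(kπ/(2n)))`; in particular the real roots of `Q_n`
are exactly `tan(kπ/(2n))` for `-(n-1) ≤ k ≤ n-1`. -/
theorem Q_eq_prod_roots_tan (n : ℕ) (hn : 1 ≤ n) (t : ℝ) :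
    Q n t =
      ∏ k ∈ Finset.Icc (-(n : ℤ) + 1) ((n : ℤ) - 1),
        (t - Real.tan (k * π / (2 * n))) := by
  obtain ⟨p, hp, hdeg, heval⟩ := exists_polynomial_Q (n - 1)
  rw [Nat.sub_add_cancel hn] at heval
  set s := Finset.Icc (-(n : ℤ) + 1) ((n : ℤ) - 1) with hs
  let v : ℤ → ℝ := fun k => Real.tan (k * π / (2 * n))
  have hn0 : (0 : ℝ) < n := by exact_mod_cast hn
  have hcard : s.card = 2 * (n - 1) + 1 := by
    rw [hs, Int.card_Icc]; omega
  have hmem : ∀ k ∈ s, (k * π / (2 * n) : ℝ) ∈ Set.Ioo (-(π / 2)) (π / 2) := by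
    intro k hk
    rw [hs, Finset.mem_Icc] at hk
    have h1 : (-n : ℝ) < k := by exact_mod_cast (by omega : -(n : ℤ) < k)
    have h2 : (k : ℝ) < n := by exact_mod_cast (by omega : k < (n : ℤ))
    constructor
    · rw [lt_div_iff₀ (by positivity)]
      nlinarith [pi_pos]
    · rw [div_lt_iff₀ (by positivity)]
      nlinarith [pi_pos]
  have hinj : Set.InjOn v s := by
    intro a ha b hb hab
    have h := Real.injOn_tan (hmem a ha) (hmem b hb) hab
    have := pi_pos.ne'
    field_simp at h
    exact_mod_cast h
  have hroot : ∀ k ∈ s, p.eval (v k) = 0 := by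
    intro k hk
    rw [heval]
    refine Q_tan_eq_zero (Real.cos_pos_of_mem_Ioo (hmem k hk)).ne' ?_
    rw [show 2 * (n : ℝ) * (k * π / (2 * n)) = k * π by field_simp]
    exact Real.sin_int_mul_pi k
  have hpn : p = Lagrange.nodal s v := by
    refine Polynomial.eq_of_degree_le_of_eval_index_eq s hinj ?_ ?_ ?_ ?_
    · rw [hdeg, hcard]
    · rw [hdeg, Lagrange.degree_nodal, hcard]
    · rw [hp.leadingCoeff, Lagrange.nodal_monic.leadingCoeff]
    · intro k hk
      rw [hroot k hk, Lagrange.eval_nodal_at_node hk]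
  rw [← heval, hpn, Lagrange.eval_nodal]
end

section
/- For every odd natural number n ≥ 1, ∫_{-∞}^{∞} t^n · log(1 + e^t) / (1 + e^t) dt = n! · ∑_{ℓ=0}^{(n-1)/2} (2 - 2^{2-2ℓ}) · ζ(n+2-2ℓ) · ζ(2ℓ), where ζ(0) = -1/2. -/
/-!
The function `h t = log (1 + e ^ t) / (1 + e ^ t)` is the convolution of two explicit functions:
the logistic density `rho x = e ^ x / (1 + e ^ x) ^ 2` on `ℝ`, and `w y = -log (1 - e ^ (-y))` on
`(0, ∞)`. Hence, by the binomial theorem and Fubini,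
`∫ t ^ n * h t = ∑ j ≤ n, (n choose j) * (∫ x ^ j * rho x) * (∫ y ^ (n - j) * w y)`.

All the moments are explicit. Expanding `w` in powers of `e ^ (-y)` and integrating termwise gives
`∫ y ^ m * w y = m! * ζ(m + 2)`. As `rho` is even, its odd moments vanish, and expanding it in
powers of `e ^ (-x)` gives the even ones,
`∫ x ^ (2 * l) * rho x = 2 * (2 * l)! * ∑ k ≥ 1, (-1) ^ (k - 1) / k ^ (2 * l)`
`= (2 * l)! * (2 - 2 ^ (2 - 2 * l)) * ζ(2 * l)`;
for `l = 0` the right side is `1` because `ζ(0) = -1/2`, and `rho` is indeed a probability density.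
For odd `n`, the even `j ≤ n` are the `2 * l` with `l ≤ (n - 1) / 2`, and the claim follows.
-/

open Real MeasureTheory

namespace LogisticMoments
open Set Filter Topology

/-- The density of the standard logistic distribution. -/
noncomputable def rho (x : ℝ) : ℝ := exp x / (1 + exp x) ^ 2

/-- The function `-log (1 - e ^ (-y)) = ∑ k ≥ 1, e ^ (-k y) / k`. Only its values at `y > 0` matter,
so it is always integrated over `Ioi 0`. -/
noncomputable def w (y : ℝ) : ℝ := -log (1 - exp (-y))

lemma rho_nonneg (x : ℝ) : 0 ≤ rho x := by unfold rho; positivity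

lemma continuous_rho : Continuous rho := by
  unfold rho
  refine continuous_exp.div (by fun_prop) fun x => by positivity

lemma measurable_w : Measurable w := by unfold w; fun_prop

lemma rho_eq (x : ℝ) : rho x = exp (-x) / (1 + exp (-x)) ^ 2 := by
  unfold rho
  rw [exp_neg]
  have := exp_pos x
  field_simp
  ring

lemma rho_neg (x : ℝ) : rho (-x) = rho x := by
  rw [rho_eq (-x), neg_neg, rho]

lemma exp_neg_lt_one {y : ℝ} (hy : 0 < y) : exp (-y) < 1 := by
  rw [exp_lt_one_iff]; linarith

lemma w_nonneg {y : ℝ} (hy : 0 < y) : 0 ≤ w y := by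
  have h1 := exp_neg_lt_one hy
  have h2 := exp_pos (-y)
  exact neg_nonneg.2 (log_nonpos (by linarith) (by linarith))

/-- A bound giving the integrability of all moments of `w`, both at `0` (where `w` has a logarithmic
singularity) and at `∞`. It comes from `log z ≥ 1 - 1 / z` at `z = √(1 - e ^ (-y))`. -/
lemma w_le {y : ℝ} (hy : 0 < y) : w y ≤ 2 * (y ^ (-1 / 2 : ℝ) * exp (-(1 / 2) * y)) := by
  have h1 := exp_neg_lt_one hy
  have h2 := exp_pos (-y)
  set u := exp (-y) with hu
  have hz : 0 < √(1 - u) := sqrt_pos.2 (by linarith)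
  have hsq : √(1 - u) ^ 2 = 1 - u := sq_sqrt (by linarith)
  have hlog : w y = -2 * log (√(1 - u)) := by
    rw [log_sqrt (by linarith)]; unfold w; ring
  have h3 : w y ≤ 2 * (u / √(1 - u)) := by
    have h4 := one_sub_inv_le_log_of_pos hz
    have h5 : (√(1 - u))⁻¹ - 1 ≤ u / √(1 - u) := by
      rw [le_div_iff₀ hz, sub_mul, inv_mul_cancel₀ hz.ne']
      have : √(1 - u) ≤ 1 := sqrt_le_one.2 (by linarith)
      nlinarith
    rw [hlog]; linarith
  have h6 : y * u ≤ 1 - u := by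
    have : y + 1 ≤ exp y := add_one_le_exp y
    have h7 : exp y * u = 1 := by rw [hu, ← exp_add]; simp
    nlinarith
  have h8 : √y * exp (-(1 / 2) * y) ≤ √(1 - u) := by
    apply le_sqrt_of_sq_le
    rw [mul_pow, sq_sqrt hy.le, ← exp_nat_mul]
    convert h6 using 3
    push_cast; ring
  have h9 : u = exp (-(1 / 2) * y) * exp (-(1 / 2) * y) := by
    rw [hu, ← exp_add]; congr 1; ring
  have h10 : y ^ (-1 / 2 : ℝ) = (√y)⁻¹ := by
    rw [sqrt_eq_rpow, ← rpow_neg hy.le]; norm_num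
  have hsy : 0 < √y := sqrt_pos.2 hy
  refine h3.trans ?_
  gcongr
  rw [h10, div_le_iff₀ hz]
  calc u = (√y)⁻¹ * exp (-(1 / 2) * y) * (√y * exp (-(1 / 2) * y)) := by
        rw [h9]; field_simp
    _ ≤ _ := by gcongr

lemma integrableOn_pow_mul_w (m : ℕ) : IntegrableOn (fun y => y ^ m * w y) (Ioi 0) := by
  have h := integrableOn_rpow_mul_exp_neg_mul_rpow (p := 1) (s := m + (-1 / 2)) (b := 1 / 2)
    (by have : (0 : ℝ) ≤ m := m.cast_nonneg
        linarith) one_pos (by norm_num)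
  refine (h.const_mul 2).mono' ?_ ?_
  · exact ((measurable_id.pow_const m).mul measurable_w).aestronglyMeasurable
  · refine (ae_restrict_mem measurableSet_Ioi).mono fun y (hy : 0 < y) => ?_
    rw [norm_of_nonneg (mul_nonneg (pow_nonneg hy.le _) (w_nonneg hy)), rpow_add hy, rpow_natCast,
      rpow_one]
    calc y ^ m * w y ≤ y ^ m * (2 * (y ^ (-1 / 2 : ℝ) * exp (-(1 / 2) * y))) := by
          gcongr; exact w_le hy
      _ = _ := by ring

lemma rho_le (x : ℝ) : rho x ≤ exp (-x) := by
  rw [rho_eq]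
  apply div_le_self (exp_pos _).le
  have := exp_pos (-x)
  nlinarith

lemma integrableOn_pow_mul_rho (j : ℕ) : IntegrableOn (fun x => x ^ j * rho x) (Ioi 0) := by
  have h := integrableOn_rpow_mul_exp_neg_mul_rpow (p := 1) (s := j) (b := 1)
    (by have : (0 : ℝ) ≤ j := j.cast_nonneg
        linarith) one_pos one_pos
  refine h.mono' ?_ ?_
  · exact ((continuous_id.pow j).mul continuous_rho).aestronglyMeasurable
  · refine (ae_restrict_mem measurableSet_Ioi).mono fun x (hx : 0 < x) => ?_
    rw [norm_of_nonneg (mul_nonneg (pow_nonneg hx.le _) (rho_nonneg x)), rpow_natCast,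
      rpow_one, neg_one_mul]
    gcongr
    exact rho_le x

lemma integrable_pow_mul_rho (j : ℕ) : Integrable (fun x => x ^ j * rho x) := by
  have h : Integrable ((Ioi 0).indicator fun x => x ^ j * rho x) :=
    (integrable_indicator_iff measurableSet_Ioi).2 (integrableOn_pow_mul_rho j)
  -- Off `0`, the function is the sum of its restriction to `x > 0` and the reflection of that.
  refine (h.add (h.comp_neg.const_mul ((-1) ^ j))).congr ?_
  filter_upwards [compl_mem_ae_iff.2 (measure_singleton (μ := volume) (0 : ℝ))] with x hx
  rcases lt_or_gt_of_ne (show x ≠ 0 from hx) with hx | hx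
  · simp only [Pi.add_apply, indicator, mem_Ioi, hx.not_gt, neg_pos, hx, if_true, if_false, rho_neg]
    rw [zero_add, ← mul_assoc, ← mul_pow]; simp
  · simp [indicator, hx, hx.le]

lemma integral_pow_mul_rho_odd {j : ℕ} (hj : Odd j) : ∫ x, x ^ j * rho x = 0 := by
  have h := integral_neg_eq_self (fun x => x ^ j * rho x) volume
  simp only [rho_neg, hj.neg_pow, neg_mul, integral_neg] at h
  linarith

lemma integral_rho : ∫ x, rho x = 1 := by
  have hd (x : ℝ) : HasDerivAt (fun x => -(1 + exp x)⁻¹) (rho x) x := by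
    have h := (((hasDerivAt_exp x).const_add 1).inv (by positivity)).neg
    convert! h using 1
    unfold rho; ring
  have hbot : Tendsto (fun x => -(1 + exp x)⁻¹) atBot (𝓝 (-1)) := by
    have h : Tendsto (fun x => 1 + exp x) atBot (𝓝 (1 + 0)) := tendsto_exp_atBot.const_add 1
    simpa using (h.inv₀ (by norm_num)).neg
  have htop : Tendsto (fun x => -(1 + exp x)⁻¹) atTop (𝓝 0) := by
    have h : Tendsto (fun x => 1 + exp x) atTop atTop :=
      tendsto_atTop_add_const_left _ _ tendsto_exp_atTop
    simpa using h.inv_tendsto_atTop.neg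
  have hi : Integrable rho := by simpa using integrable_pow_mul_rho 0
  simpa using integral_of_hasDerivAt_of_tendsto hd hi hbot htop

/-- The convolution identity. With `a = e ^ t` and `u = e ^ (-y)`, the integral becomes that of
`-log (1 - u) * a / (1 + a * u) ^ 2` over `0 < u < 1`, and integration by parts yields the
antiderivative
`a * (1 - u) * log (1 - u) / ((1 + a * u) * (1 + a)) + log (1 + a * u) / (1 + a)`,
which is continuous up to `u = 1`. -/
lemma integral_rho_sub_mul_w (t : ℝ) :
    ∫ y in Ioi 0, rho (t - y) * w y = log (1 + exp t) / (1 + exp t) := by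
  set a := exp t with ha
  have ha0 : 0 < a := exp_pos t
  set g : ℝ → ℝ := fun y =>
    -((1 - exp (-y)) * log (1 - exp (-y)) * (a / ((1 + a * exp (-y)) * (1 + a)))
      + log (1 + a * exp (-y)) / (1 + a)) with hg
  have hpos (y : ℝ) : 0 < 1 + a * exp (-y) := by positivity
  have hcont : Continuous g := by
    have h1 : Continuous fun y : ℝ => (1 - exp (-y)) * log (1 - exp (-y)) :=
      continuous_mul_log.comp (by fun_prop : Continuous fun y : ℝ => 1 - exp (-y))
    have h2 : Continuous fun y : ℝ => a / ((1 + a * exp (-y)) * (1 + a)) :=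
      continuous_const.div (by fun_prop) fun y => by positivity
    have h3 : Continuous fun y : ℝ => log (1 + a * exp (-y)) :=
      Continuous.log (by fun_prop) fun y => (hpos y).ne'
    exact ((h1.mul h2).add (h3.div_const _)).neg
  have htop : Tendsto g atTop (𝓝 0) := by
    have hu : Tendsto (fun y : ℝ => exp (-y)) atTop (𝓝 0) :=
      tendsto_exp_neg_atTop_nhds_zero
    have h1 : Tendsto (fun y : ℝ => (1 - exp (-y)) * log (1 - exp (-y))) atTop
        (𝓝 ((1 - 0) * log (1 - 0))) := (continuous_mul_log.tendsto _).comp (hu.const_sub 1)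
    have h2 : Tendsto (fun y : ℝ => 1 + a * exp (-y)) atTop (𝓝 (1 + a * 0)) :=
      (hu.const_mul a).const_add 1
    have h3 := (h1.mul ((tendsto_const_nhds (x := a)).div (h2.mul_const (1 + a)) (by
      simp; positivity))).add ((h2.log (by simp)).div_const (1 + a))
    simpa [hg, add_comm] using h3.neg
  have hd : ∀ y ∈ Ioi (0 : ℝ), HasDerivAt g (rho (t - y) * w y) y := by
    intro y hy
    have hlt := exp_neg_lt_one hy
    have hu : HasDerivAt (fun y : ℝ => exp (-y)) (-exp (-y)) y := by
      simpa using (hasDerivAt_neg y).exp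
    have h1 := hu.const_sub 1
    have hne : 1 - exp (-y) ≠ 0 := by linarith
    have h2 := (hu.const_mul a).const_add 1
    have h3 := ((h1.mul (h1.log hne)).mul ((hasDerivAt_const y a).div
      (h2.mul_const (1 + a)) (by positivity))).add ((h2.log (hpos y).ne').div_const (1 + a))
    convert! h3.neg using 1
    have hr : rho (t - y) = a * exp (-y) / (1 + a * exp (-y)) ^ 2 := by
      rw [rho, sub_eq_add_neg, exp_add]
    rw [hr]
    unfold w
    simp only [Pi.mul_apply, Pi.div_apply]
    have := hpos y
    have h1a : (1 + a) ≠ 0 := by positivity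
    generalize exp (-y) = u at *
    generalize log (1 - u) = L at *
    field_simp
    ring
  have h := integral_Ioi_of_hasDerivAt_of_nonneg hcont.continuousWithinAt hd
    (fun y hy => mul_nonneg (rho_nonneg _) (w_nonneg hy)) htop
  rw [h]
  simp [hg]

lemma integral_pow_mul_w (m : ℕ) :
    ((∫ y in Ioi 0, y ^ m * w y : ℝ) : ℂ) = m.factorial * riemannZeta (m + 2) := by
  have h := hasSum_mellin (ι := ℕ) (a := fun k => ((k + 1 : ℝ) : ℂ)⁻¹) (p := fun k => k + 1)
    (F := fun y => (w y : ℂ)) (s := (m + 1 : ℕ)) (fun k => Or.inr (by positivity))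
    (by simp; positivity) ?_ ?_
  · have h2 := h.tsum_eq
    rw [mellin] at h2
    rw [← integral_complex_ofReal]
    have h3 : ∫ t in Ioi (0 : ℝ), (t : ℂ) ^ (((m + 1 : ℕ) : ℂ) - 1) • (w t : ℂ)
        = ∫ y in Ioi (0 : ℝ), ((y ^ m * w y : ℝ) : ℂ) := by
      refine setIntegral_congr_fun measurableSet_Ioi fun y hy => ?_
      simp
    rw [← h3, ← h2, zeta_eq_tsum_one_div_nat_add_one_cpow (by simp; linarith [(m.cast_nonneg : (0:ℝ) ≤ m)]),
      ← tsum_mul_left]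
    congr 1 with k
    have hk : (k + 1 : ℂ) ≠ 0 := by exact_mod_cast k.succ_ne_zero
    rw [show (m + 2 : ℂ) = ((m + 2 : ℕ) : ℂ) by push_cast; ring, Complex.cpow_natCast,
      Complex.cpow_natCast]
    push_cast
    rw [Complex.Gamma_nat_eq_factorial]
    field_simp
    ring
  · intro y hy
    have h1 := hasSum_pow_div_log_of_abs_lt_one (x := exp (-y))
      (by rw [abs_of_pos (exp_pos _)]; exact exp_neg_lt_one hy)
    have h2 := Complex.hasSum_ofReal.2 h1
    convert! h2 using 2 with k
    · rw [← exp_nat_mul]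
      push_cast
      rw [div_eq_inv_mul]
      congr 2
      ring
  · have h1 := (summable_nat_add_iff 1).2
      (Real.summable_one_div_nat_pow.2 (show 1 < m + 2 by omega))
    refine h1.congr fun k => ?_
    have : (0 : ℝ) < k + 1 := by positivity
    simp only [Complex.natCast_re, norm_inv, Complex.norm_real, norm_of_nonneg this.le]
    rw [rpow_natCast]
    push_cast
    field_simp
    ring

/-- The expansion of `rho` in powers of `e ^ (-y)`, from `∑ k * r ^ k = r / (1 - r) ^ 2` at
`r = -e ^ (-y)`. -/
lemma hasSum_rho {y : ℝ} (hy : 0 < y) :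
    HasSum (fun k : ℕ => (-1) ^ k * (k + 1) * exp (-(k + 1) * y)) (rho y) := by
  have h := hasSum_coe_mul_geometric_of_norm_lt_one (r := -exp (-y))
    (by rw [norm_neg, norm_of_nonneg (exp_pos _).le]; exact exp_neg_lt_one hy)
  have h2 := ((hasSum_nat_add_iff' 1).2 h).neg
  convert! h2 using 1
  · ext k
    rw [neg_pow (exp (-y)), ← exp_nat_mul, pow_succ]
    push_cast
    rw [show (k + 1 : ℝ) * -y = -(k + 1) * y by ring]
    ring
  · rw [rho_eq]; simp; ring

/-- The Dirichlet eta function in terms of `ζ`. -/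
lemma tsum_alternating {s : ℕ} (hs : 2 ≤ s) :
    ∑' k : ℕ, (-1 : ℂ) ^ k / (k + 1) ^ s = (1 - 2 * (2 ^ s)⁻¹) * riemannZeta s := by
  have hz : HasSum (fun k : ℕ => 1 / (k + 1 : ℂ) ^ s) (riemannZeta s) := by
    have h1 := (summable_nat_add_iff 1).2
      (Complex.summable_one_div_nat_cpow (p := s).2 (by simpa using by omega))
    have h2 : Summable (fun k : ℕ => 1 / (k + 1 : ℂ) ^ s) :=
      h1.congr fun k => by simp
    convert! h2.hasSum using 1
    rw [zeta_eq_tsum_one_div_nat_add_one_cpow (by simpa using by omega)]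
    simp
  -- The terms with odd index `2 * k + 1` are those of the even integers `2 * (k + 1)`.
  have hodd : HasSum (fun k : ℕ => 1 / ((2 * k + 1 : ℕ) + 1 : ℂ) ^ s) ((2 ^ s)⁻¹ * riemannZeta s) := by
    convert! hz.mul_left ((2 ^ s : ℂ)⁻¹) using 2 with k
    rw [one_div, one_div, ← mul_inv, ← mul_pow]
    push_cast; congr 2; ring
  have heven : HasSum (fun k : ℕ => 1 / ((2 * k : ℕ) + 1 : ℂ) ^ s)
      (riemannZeta s - (2 ^ s)⁻¹ * riemannZeta s) := by
    have hs' : Summable (fun k : ℕ => 1 / ((2 * k : ℕ) + 1 : ℂ) ^ s) :=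
      hz.summable.comp_injective (i := fun k => 2 * k) (fun a b h => by simpa using h)
    have := (hs'.hasSum.even_add_odd (f := fun k : ℕ => 1 / (k + 1 : ℂ) ^ s) hodd).unique hz
    rw [← eq_sub_iff_add_eq] at this
    rw [← this]
    exact hs'.hasSum
  have h := HasSum.even_add_odd (f := fun k : ℕ => (-1 : ℂ) ^ k / (k + 1) ^ s)
    (by simpa [pow_mul] using heven)
    (by simpa [pow_succ, pow_mul, neg_div] using hodd.neg)
  rw [h.tsum_eq]; ring

lemma integral_pow_mul_rho_even (l : ℕ) :
    ((∫ x, x ^ (2 * l) * rho x : ℝ) : ℂ) =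
      (2 * l).factorial * ((2 - (2 : ℂ) ^ ((2 : ℤ) - 2 * l)) * riemannZeta (2 * l)) := by
  rcases Nat.eq_zero_or_pos l with rfl | hl
  · simp [integral_rho, riemannZeta_zero]; norm_num
  have h0 : ∫ x, x ^ (2 * l) * rho x = 2 * ∫ x in Ioi (0 : ℝ), x ^ (2 * l) * rho x := by
    rw [← integral_comp_abs (f := fun x => x ^ (2 * l) * rho x)]
    congr 1 with x
    rcases abs_choice x with h | h <;> rw [h]
    rw [rho_neg, (even_two_mul l).neg_pow]
  have h := hasSum_mellin (ι := ℕ) (a := fun k => (((-1) ^ k * (k + 1) : ℝ) : ℂ))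
    (p := fun k => k + 1)
    (F := fun y => (rho y : ℂ)) (s := (2 * l + 1 : ℕ)) (fun k => Or.inr (by positivity))
    (by simp; positivity) ?_ ?_
  · have h2 := h.tsum_eq
    rw [mellin] at h2
    have h3 : ∫ t in Ioi (0 : ℝ), (t : ℂ) ^ (((2 * l + 1 : ℕ) : ℂ) - 1) • (rho t : ℂ)
        = ∫ y in Ioi (0 : ℝ), ((y ^ (2 * l) * rho y : ℝ) : ℂ) := by
      refine setIntegral_congr_fun measurableSet_Ioi fun y hy => ?_
      have : ((2 * l + 1 : ℕ) : ℂ) - 1 = (2 * l : ℕ) := by push_cast; ring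
      simp only [this, Complex.cpow_natCast]
      simp
    have h4 := tsum_alternating (s := 2 * l) (by omega)
    rw [h0, Complex.ofReal_mul, ← integral_complex_ofReal, ← h3, ← h2]
    have h5 : (2 : ℂ) ^ ((2 : ℤ) - 2 * l) = 4 * (2 ^ (2 * l))⁻¹ := by
      rw [zpow_sub₀ two_ne_zero]
      norm_cast
    have h6 : ∀ k : ℕ, Complex.Gamma (2 * l + 1 : ℕ) * (((-1) ^ k * (k + 1) : ℝ) : ℂ) /
        ((k + 1 : ℝ) : ℂ) ^ ((2 * l + 1 : ℕ) : ℂ)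
        = (2 * l).factorial * ((-1 : ℂ) ^ k / (k + 1) ^ (2 * l)) := by
      intro k
      have hk : (k + 1 : ℂ) ≠ 0 := by exact_mod_cast k.succ_ne_zero
      rw [Complex.cpow_natCast, Nat.cast_succ, Complex.Gamma_nat_eq_factorial]
      push_cast
      field_simp
      ring
    simp_rw [h6]
    rw [tsum_mul_left, h4, h5]
    push_cast
    ring
  · intro y hy
    have h2 := Complex.hasSum_ofReal.2 (hasSum_rho hy)
    convert! h2 using 2 with k
    push_cast; ring
  · have h1 := (summable_nat_add_iff 1).2
      (Real.summable_one_div_nat_pow.2 (show 1 < 2 * l by omega))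
    refine h1.congr fun k => ?_
    have : (0 : ℝ) < k + 1 := by positivity
    simp only [Complex.natCast_re, Complex.norm_real, norm_mul, norm_pow, norm_neg, norm_one,
      one_pow, one_mul, norm_of_nonneg this.le]
    rw [rpow_natCast]
    push_cast
    field_simp
    ring

/-- Moments of a convolution: the binomial theorem and Fubini after the shear `x = t - y`. -/
lemma integral_eq_sum_moments (n : ℕ) :
    ∫ t : ℝ, t ^ n * log (1 + exp t) / (1 + exp t) =
      ∑ j ∈ Finset.range (n + 1), (∫ x, x ^ j * rho x) *
        (∫ y in Ioi 0, y ^ (n - j) * w y) * n.choose j := by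
  set ν : Measure ℝ := volume.restrict (Ioi 0) with hν
  have hterm (j : ℕ) : Integrable (fun z : ℝ × ℝ =>
      (z.1 ^ j * rho z.1) * (z.2 ^ (n - j) * w z.2) * (n.choose j : ℝ)) (volume.prod ν) :=
    ((integrable_pow_mul_rho j).mul_prod (integrableOn_pow_mul_w (n - j))).mul_const _
  have hexp (z : ℝ × ℝ) : (z.1 + z.2) ^ n * (rho z.1 * w z.2) =
      ∑ j ∈ Finset.range (n + 1),
        (z.1 ^ j * rho z.1) * (z.2 ^ (n - j) * w z.2) * (n.choose j : ℝ) := by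
    rw [add_pow, Finset.sum_mul]
    exact Finset.sum_congr rfl fun j _ => by ring
  have hint : Integrable (fun z : ℝ × ℝ => (z.1 + z.2) ^ n * (rho z.1 * w z.2))
      (volume.prod ν) := by
    simp_rw [hexp]
    exact integrable_finsetSum _ fun j _ => hterm j
  have hmp : MeasurePreserving (fun z : ℝ × ℝ => (z.1 - z.2, z.2)) (volume.prod ν)
      (volume.prod ν) := measurePreserving_sub_prod volume ν
  have hint' : Integrable (fun z : ℝ × ℝ => z.1 ^ n * (rho (z.1 - z.2) * w z.2))
      (volume.prod ν) := by
    have := hmp.integrable_comp_of_integrable hint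
    simpa [Function.comp_def] using this
  calc ∫ t : ℝ, t ^ n * log (1 + exp t) / (1 + exp t)
      = ∫ t : ℝ, ∫ y, t ^ n * (rho (t - y) * w y) ∂ν := by
        congr 1 with t
        rw [integral_const_mul, integral_rho_sub_mul_w, mul_div_assoc]
    _ = ∫ y, (∫ t : ℝ, t ^ n * (rho (t - y) * w y)) ∂ν := integral_integral_swap hint'
    _ = ∫ y, (∫ x : ℝ, (x + y) ^ n * (rho x * w y)) ∂ν := by
        congr 1 with y
        rw [← integral_sub_right_eq_self (fun x => (x + y) ^ n * (rho x * w y)) y]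
        simp
    _ = ∫ z, (z.1 + z.2) ^ n * (rho z.1 * w z.2) ∂(volume.prod ν) :=
        (integral_prod_symm _ hint).symm
    _ = _ := by
        simp_rw [hexp]
        rw [integral_finsetSum _ fun j _ => hterm j]
        refine Finset.sum_congr rfl fun j _ => ?_
        rw [integral_mul_const, integral_prod_mul (fun x => x ^ j * rho x)
          (fun y => y ^ (n - j) * w y)]

end LogisticMoments

open LogisticMoments in
/-- For every odd natural number `n ≥ 1`,
`∫_{-∞}^∞ t^n·log(1+e^t)/(1+e^t) dt
  = n!·∑_{ℓ=0}^{(n-1)/2} (2 - 2^{2-2ℓ})·ζ(n+2-2ℓ)·ζ(2ℓ)`, where `ζ(0) = -1/2`. -/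
theorem integral_odd_pow_eq_sum_zeta (n : ℕ) (hn : 1 ≤ n) (hodd : Odd n) :
    ((∫ t : ℝ, t ^ n * Real.log (1 + Real.exp t) / (1 + Real.exp t) : ℝ) : ℂ) =
      (Nat.factorial n) *
        ∑ ℓ ∈ Finset.range ((n - 1) / 2 + 1),
          (2 - (2 : ℂ) ^ ((2 : ℤ) - 2 * ℓ)) * riemannZeta ((n : ℂ) + 2 - 2 * ℓ) *
            riemannZeta (2 * ℓ) := by
  obtain ⟨m, rfl⟩ := hodd
  rw [integral_eq_sum_moments, show (2 * m + 1 - 1) / 2 + 1 = m + 1 by omega,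
    show 2 * m + 1 + 1 = 2 * (m + 1) by ring, Finset.mul_sum]
  have hsplit (f : ℕ → ℝ) (N : ℕ) : ∑ j ∈ Finset.range (2 * N), f j =
      ∑ l ∈ Finset.range N, (f (2 * l) + f (2 * l + 1)) := by
    induction N with
    | zero => simp
    | succ k ih =>
      rw [show 2 * (k + 1) = 2 * k + 1 + 1 by ring, Finset.sum_range_succ, Finset.sum_range_succ,
        Finset.sum_range_succ, ih]
      ring
  rw [hsplit, Complex.ofReal_sum]
  refine Finset.sum_congr rfl fun l hl => ?_
  have hl' : l ≤ m := Nat.lt_succ_iff.1 (Finset.mem_range.1 hl)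
  rw [integral_pow_mul_rho_odd ⟨l, rfl⟩, zero_mul, zero_mul, add_zero]
  push_cast
  rw [integral_pow_mul_rho_even, integral_pow_mul_w,
    ← Nat.choose_mul_factorial_mul_factorial (show 2 * l ≤ 2 * m + 1 by omega)]
  have harg : (((2 * m + 1 - 2 * l : ℕ) : ℂ) + 2) = 2 * m + 1 + 2 - 2 * l := by
    rw [Nat.cast_sub (by omega)]; push_cast; ring
  rw [harg]
  push_cast
  ring
end

section
/- For every natural number m ≥ 1, ∑_{ℓ=1}^{∞} (-1)^{ℓ+1} H_ℓ / ℓ^{2m} = (m - (2m+1)/2^{2m+1}) · ζ(2m+1) - ∑_{k=1}^{m-1} (1 - 2^{1-2k}) · ζ(2k) · ζ(2m-2k+1). -/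
open Real

/-!
Sum the absolutely convergent double series
`∑ (-1)ⁿ / n²ᵐ⁻¹ · 1 / k · (1 / (n - k) + 1 / (n + k))` over `n, k ≥ 1`, with `1 / (n - k)` omitted
for `n = k`, in both orders. It is the sum of `(-1)ⁿ / (n²ᵐ⁻¹ k (n - k))` over integers
`n ≠ 0, k` and `k ≥ 1`, with `n` and `-n` paired.

* For fixed `n` the sum over `k` telescopes to `(-1)ⁿ / n²ᵐ · (2 Hₙ - 2 / n)` (`hasSum_row`).
* For fixed `k` the sum over `n` has a closed form in powers of `1 / k`, with coefficients the
  values `η(2i) = (1 - 2¹⁻²ⁱ) ζ(2i)` (`hasSum_col`). It is proved by induction on `m`: the case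
  `m = 1` telescopes (`hasSum_col_one`), and the step is a partial fraction identity (`col_succ`).

Equating the two totals gives
`2 ∑ (-1)ⁿ⁺¹ Hₙ / n²ᵐ = (2m + 1) η(2m + 1) - ζ(2m + 1) - 2 ∑ η(2i) ζ(2m + 1 - 2i)`, the last sum over
`1 ≤ i < m`, which is the claim. The lemmas are stated with `m + 1` in place of `m`.
-/

/-! ### Telescoping series -/

open Filter Topology in
/-- Telescoping with step `p`; the source of the closed forms for the rows and the columns. -/
lemma tendsto_sum_sub_shift (v : ℕ → ℝ) (hv : Tendsto v atTop (𝓝 0)) (p : ℕ) :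
    Tendsto (fun N => ∑ n ∈ Finset.range N, (v n - v (n + p))) atTop
      (𝓝 (∑ i ∈ Finset.range p, v i)) := by
  have h : ∀ N, ∑ n ∈ Finset.range N, (v n - v (n + p)) =
      ∑ i ∈ Finset.range p, v i - ∑ i ∈ Finset.range p, v (N + i) := by
    intro N
    have h1 := Finset.sum_range_add v N p
    have h2 := Finset.sum_range_add v p N
    rw [add_comm p N] at h2
    rw [Finset.sum_sub_distrib]
    simp only [add_comm _ p]
    linarith
  simp only [h]
  have h0 : Tendsto (fun N => ∑ i ∈ Finset.range p, v (N + i)) atTop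
      (𝓝 (∑ i ∈ Finset.range p, (0 : ℝ))) :=
    tendsto_finsetSum _ fun i _ => hv.comp (tendsto_add_atTop_nat i)
  simpa using tendsto_const_nhds.sub h0

open Filter Topology in
lemma hasSum_of_tendsto_range {f : ℕ → ℝ} {a : ℝ} (hf : Summable f)
    (h : Tendsto (fun N => ∑ n ∈ Finset.range N, f n) atTop (𝓝 a)) : HasSum f a := by
  rw [← tendsto_nhds_unique hf.hasSum.tendsto_sum_nat h]
  exact hf.hasSum

/-! ### Absolute convergence of the double series -/

/-- Since `n + k ≥ √n √k`, the terms are at most `n ^ (-3/2) * k ^ (-3/2)`. -/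
lemma summable_add_kernel :
    Summable fun x : ℕ × ℕ => 1 / ((x.1 : ℝ) * x.2 * (x.1 + x.2)) := by
  have hg : Summable fun n : ℕ => 1 / ((n : ℝ) * √n) := by
    refine (Real.summable_one_div_nat_rpow.2 (by norm_num : (1 : ℝ) < 3 / 2)).congr fun n => ?_
    rcases Nat.eq_zero_or_pos n with rfl | hn
    · norm_num
    have hn' : (0 : ℝ) < n := by exact_mod_cast hn
    rw [show (3 / 2 : ℝ) = 1 + 1 / 2 by norm_num, Real.rpow_add hn', Real.rpow_one,
      ← Real.sqrt_eq_rpow]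
  refine Summable.of_nonneg_of_le (fun x => by positivity) (fun x => ?_)
    (hg.mul_of_nonneg hg (fun n => by positivity) (fun n => by positivity))
  obtain ⟨a, b⟩ := x
  dsimp only
  rcases Nat.eq_zero_or_pos a with rfl | ha
  · simp
  rcases Nat.eq_zero_or_pos b with rfl | hb
  · simp
  have ha' : (0 : ℝ) < a := by exact_mod_cast ha
  have hb' : (0 : ℝ) < b := by exact_mod_cast hb
  rw [div_mul_div_comm, one_mul]
  apply one_div_le_one_div_of_le (by positivity)
  have h1 : √(a : ℝ) * √b ≤ a + b := by
    nlinarith [sq_nonneg (√(a : ℝ) - √b), Real.sq_sqrt ha'.le, Real.sq_sqrt hb'.le,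
      Real.sqrt_nonneg (a : ℝ), Real.sqrt_nonneg (b : ℝ)]
  calc (a : ℝ) * √a * (b * √b) = a * b * (√a * √b) := by ring
    _ ≤ _ := by gcongr

/-- The diagonal terms are `0`. The half `k < n` is the previous series, reindexed by
`(k, n - k)`; the other half follows by symmetry. -/
lemma summable_sub_kernel :
    Summable fun x : ℕ × ℕ => 1 / ((x.1 : ℝ) * x.2 * |(x.1 : ℝ) - x.2|) := by
  let Q : ℕ × ℕ → ℝ := fun x =>
    if x.2 < x.1 then 1 / ((x.1 : ℝ) * x.2 * |(x.1 : ℝ) - x.2|) else 0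
  have hQ : Summable Q := by
    have hi : Function.Injective fun x : ℕ × ℕ => (x.1 + x.2, x.1) := by
      rintro ⟨a, b⟩ ⟨c, d⟩ h
      simp only [Prod.mk.injEq] at h ⊢
      omega
    rw [← hi.summable_iff]
    · refine summable_add_kernel.congr fun x => ?_
      obtain ⟨a, b⟩ := x
      rcases Nat.eq_zero_or_pos b with rfl | hb
      · simp [Q]
      · simp only [Q, Function.comp, lt_add_iff_pos_right, hb, if_true]
        push_cast
        rw [add_sub_cancel_left, abs_of_nonneg (Nat.cast_nonneg b)]
        ring
    · rintro ⟨n, k⟩ h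
      have : ¬ k < n := fun hlt => h ⟨(k, n - k), by simp; omega⟩
      simp [Q, this]
  refine (hQ.add ((Equiv.prodComm ℕ ℕ).summable_iff.2 hQ)).congr fun x => ?_
  obtain ⟨a, b⟩ := x
  simp only [Q, Function.comp, Equiv.prodComm_apply, Prod.swap]
  rcases lt_trichotomy a b with h | rfl | h
  · rw [if_neg h.not_gt, if_pos h, abs_sub_comm]; ring
  · simp
  · rw [if_pos h, if_neg h.not_gt]; ring

/-- The term of the double series at `x = (n, k)`:
`(-1)ⁿ n⁻ᵖ k⁻¹ (1 / (n - k) + 1 / (n + k))`. Division by zero drops `1 / (n - k)` on the diagonal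
`n = k`, and, for `p ≥ 1`, makes the terms with `n = 0` or `k = 0` vanish. -/
noncomputable def doubleTerm (p : ℕ) (x : ℕ × ℕ) : ℝ :=
  (-1) ^ x.1 / (x.1 : ℝ) ^ p * (1 / x.2 * (1 / ((x.1 : ℝ) - x.2) + 1 / ((x.1 : ℝ) + x.2)))

lemma summable_doubleTerm (p : ℕ) (hp : 1 ≤ p) : Summable (doubleTerm p) := by
  refine Summable.of_norm_bounded (summable_sub_kernel.add summable_add_kernel) fun x => ?_
  obtain ⟨n, k⟩ := x
  simp only [doubleTerm, norm_mul, norm_div, norm_pow, norm_neg, norm_one, one_pow,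
    Real.norm_natCast]
  rcases Nat.eq_zero_or_pos n with rfl | hn
  · simp [show p ≠ 0 by omega]
  have hn' : (1 : ℝ) ≤ n := by exact_mod_cast hn
  have h1 : 1 / (n : ℝ) ^ p ≤ 1 / n :=
    one_div_le_one_div_of_le (by positivity) (le_self_pow₀ hn' (by omega))
  have h2 : ‖1 / ((n : ℝ) - k) + 1 / ((n : ℝ) + k)‖ ≤ 1 / |(n : ℝ) - k| + 1 / ((n : ℝ) + k) := by
    refine (norm_add_le _ _).trans (le_of_eq ?_)
    rw [norm_div, norm_div, norm_one, Real.norm_eq_abs, Real.norm_eq_abs,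
      abs_of_nonneg (by positivity : (0 : ℝ) ≤ n + k)]
  calc _ ≤ 1 / (n : ℝ) * (1 / k * (1 / |(n : ℝ) - k| + 1 / ((n : ℝ) + k))) := by gcongr
    _ = _ := by simp only [one_div, mul_inv]; ring

/-! ### Row sums -/

lemma hasSum_of_value_eq {f : ℕ → ℝ} {a b : ℝ} (h : HasSum f a) (hab : a = b) : HasSum f b :=
  hab ▸ h

open Filter Topology in
/-- The sum over `k`, from `n / (k (n - k)) = 1 / k - 1 / (k - n)` and
`n / (k (n + k)) = 1 / k - 1 / (k + n)`, both of which telescope. -/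
lemma hasSum_row (p n : ℕ) (hp : 1 ≤ p) :
    HasSum (fun k => doubleTerm p (n, k))
      ((-1) ^ n / (n : ℝ) ^ p * ((2 * (harmonic n : ℝ) - 2 / n) / n)) := by
  rcases Nat.eq_zero_or_pos n with rfl | hn
  · simp [doubleTerm, show p ≠ 0 by omega]
  refine hasSum_of_tendsto_range ((summable_doubleTerm p hp).prod_factor n) ?_
  have hn' : (n : ℝ) ≠ 0 := by exact_mod_cast hn.ne'
  have t0 : Tendsto (fun k : ℕ => 1 / (k : ℝ)) atTop (𝓝 0) := tendsto_one_div_atTop_nhds_zero_nat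
  have t1 : Tendsto (fun k : ℕ => 1 / ((k : ℝ) - n)) atTop (𝓝 0) := by
    rw [← tendsto_add_atTop_iff_nat n]
    simpa using t0
  have A := tendsto_sum_sub_shift _ t0 n
  have B := tendsto_sum_sub_shift _ t1 n
  -- At `k = n` the term `1 / (n - k)` is absent, while the telescoping form contributes `1 / n`.
  have C := (hasSum_ite_eq n (-1 / (n : ℝ))).tendsto_sum_nat
  have hA : ∑ i ∈ Finset.range n, 1 / (i : ℝ) = harmonic n - 1 / n := by
    obtain ⟨j, rfl⟩ := Nat.exists_eq_succ_of_ne_zero hn.ne'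
    rw [Finset.sum_range_succ', harmonic_succ, harmonic]
    push_cast
    simp
  have hB : ∑ i ∈ Finset.range n, 1 / ((i : ℝ) - n) = -harmonic n := by
    rw [← Finset.sum_range_reflect, harmonic, Rat.cast_sum, ← Finset.sum_neg_distrib]
    refine Finset.sum_congr rfl fun i hi => ?_
    have hi' := Finset.mem_range.1 hi
    rw [Nat.sub_sub, Nat.cast_sub (by omega)]
    push_cast
    rw [one_div, ← inv_neg]
    congr 1; ring
  rw [hA] at A
  rw [hB] at B
  have key := (((A.sub B).add C).mul_const (1 / (n : ℝ))).const_mul ((-1) ^ n / (n : ℝ) ^ p)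
  refine (key.congr fun N => ?_).trans (le_of_eq ?_)
  · rw [← Finset.sum_sub_distrib, ← Finset.sum_add_distrib, Finset.sum_mul, Finset.mul_sum]
    refine Finset.sum_congr rfl fun k _ => ?_
    simp only [doubleTerm]
    congr 1
    push_cast
    rcases Nat.eq_zero_or_pos k with rfl | hk
    · simp [hn.ne]
    have hk' : (k : ℝ) ≠ 0 := by exact_mod_cast hk.ne'
    have hnk : (n : ℝ) + k ≠ 0 := by positivity
    have hkn : (k : ℝ) + n ≠ 0 := by positivity
    by_cases h : k = n
    · subst h
      simp
      field_simp
      ring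
    · have h1 : (n : ℝ) - k ≠ 0 := sub_ne_zero.2 (by exact_mod_cast Ne.symm h)
      have h2 : (k : ℝ) - n ≠ 0 := sub_ne_zero.2 (by exact_mod_cast h)
      rw [if_neg h, add_sub_cancel_right, ← neg_sub (n : ℝ) k]
      field_simp
      ring
  · congr 1
    ring

/-! ### Column sums, one telescoping case -/

/-- The factor of the double series that is summed over `n` for fixed `k`. -/
noncomputable def colTerm (p k n : ℕ) : ℝ :=
  (-1) ^ n / (n : ℝ) ^ p * (1 / ((n : ℝ) - k) + 1 / ((n : ℝ) + k))

lemma doubleTerm_eq (p k n : ℕ) : doubleTerm p (n, k) = 1 / k * colTerm p k n := by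
  simp only [doubleTerm, colTerm]; ring

open Filter Topology in
/-- Away from `n = 0` and `n = k`, `colTerm 1 k n` is `k⁻¹ (-1)ⁿ (1 / (n - k) - 1 / (n + k))`, a
telescoping series with step `2k`, as `(-1)ⁿ⁺²ᵏ = (-1)ⁿ`. -/
lemma hasSum_col_one (k : ℕ) (hk : 1 ≤ k) :
    HasSum (colTerm 1 k) ((1 + (-1) ^ k) / (k : ℝ) ^ 2) := by
  have hk' : (k : ℝ) ≠ 0 := by exact_mod_cast (by omega : k ≠ 0)
  have hs : Summable (colTerm 1 k) := by
    have := (((Equiv.prodComm ℕ ℕ).summable_iff.2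
      (summable_doubleTerm 1 le_rfl)).prod_factor k).mul_left (k : ℝ)
    refine this.congr fun n => ?_
    simp only [Function.comp, Equiv.prodComm_apply, Prod.swap, doubleTerm_eq]
    field_simp
  refine hasSum_of_tendsto_range hs ?_
  have t0 : Tendsto (fun n : ℕ => (-1 : ℝ) ^ n / ((n : ℝ) - k)) atTop (𝓝 0) := by
    have t1 : Tendsto (fun n : ℕ => 1 / ((n : ℝ) - k)) atTop (𝓝 0) := by
      rw [← tendsto_add_atTop_iff_nat k]
      simpa using tendsto_one_div_atTop_nhds_zero_nat (𝕜 := ℝ)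
    rw [tendsto_zero_iff_norm_tendsto_zero] at t1 ⊢
    simpa using t1
  have A := tendsto_sum_sub_shift _ t0 (2 * k)
  have hA : ∑ i ∈ Finset.range (2 * k), (-1 : ℝ) ^ i / ((i : ℝ) - k) = -1 / k := by
    obtain ⟨j, rfl⟩ := Nat.exists_eq_succ_of_ne_zero (by omega : k ≠ 0)
    rw [show 2 * j.succ = (2 * j + 1) + 1 by simp; ring, Finset.sum_range_succ']
    have hz : ∑ i ∈ Finset.range (2 * j + 1),
        (-1 : ℝ) ^ (i + 1) / (((i + 1 : ℕ) : ℝ) - (j.succ : ℕ)) = 0 := by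
      -- The terms `i` and `2k - i` have opposite denominators and equal signs.
      apply self_eq_neg.1
      conv_lhs => rw [← Finset.sum_range_reflect]
      rw [← Finset.sum_neg_distrib]
      refine Finset.sum_congr rfl fun i hi => ?_
      have hi' : i ≤ 2 * j := Nat.lt_succ_iff.1 (Finset.mem_range.1 hi)
      obtain ⟨d, hd⟩ := Nat.exists_eq_add_of_le hi'
      have hd' : 2 * j + 1 - 1 - i = d := by omega
      have hj : (2 : ℝ) * j = i + d := by exact_mod_cast hd
      have hpar : (-1 : ℝ) ^ (d + 1) = (-1) ^ (i + 1) := by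
        rw [neg_one_pow_eq_pow_mod_two, neg_one_pow_eq_pow_mod_two (i + 1)]
        congr 1; omega
      rw [hd', hpar, ← div_neg]
      congr 1
      push_cast
      linarith
    rw [hz]
    push_cast
    rw [zero_add, pow_zero, zero_sub, div_neg, neg_div]
  rw [hA] at A
  -- `C` and `D` account for `n = k` and `n = 0`, where the partial fraction identity fails.
  have C := (hasSum_ite_eq k ((-1) ^ k / (k : ℝ) ^ 2)).tendsto_sum_nat
  have D := (hasSum_ite_eq 0 (2 / (k : ℝ) ^ 2)).tendsto_sum_nat
  have key := ((A.const_mul (1 / (k : ℝ))).add C).add D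
  refine (key.congr fun N => ?_).trans (le_of_eq ?_)
  · rw [Finset.mul_sum, ← Finset.sum_add_distrib, ← Finset.sum_add_distrib]
    refine Finset.sum_congr rfl fun n _ => ?_
    simp only [colTerm]
    have hpar : (-1 : ℝ) ^ (n + 2 * k) = (-1) ^ n := by simp [pow_add, pow_mul]
    rw [hpar]
    push_cast
    rw [show (n : ℝ) + 2 * k - k = n + k by ring]
    rcases Nat.eq_zero_or_pos n with rfl | hn
    · simp [show 0 ≠ k by omega]
      field_simp
      ring
    have hn' : (n : ℝ) ≠ 0 := by exact_mod_cast hn.ne'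
    have hnk : (n : ℝ) + k ≠ 0 := by positivity
    rw [if_neg hn.ne']
    by_cases h : n = k
    · subst h
      simp
      field_simp
      ring
    · have h1 : (n : ℝ) - k ≠ 0 := sub_ne_zero.2 (by exact_mod_cast h)
      rw [if_neg h]
      field_simp
      ring
  · congr 1
    field_simp
    ring

/-! ### Zeta and eta values -/

/-- `ζ(s)` for natural `s ≥ 2`, as a real number. For `s ≥ 1` the term at `n = 0` is `1 / 0 = 0`. -/
noncomputable def zetaReal (s : ℕ) : ℝ := ∑' n : ℕ, 1 / (n : ℝ) ^ s

/-- The Dirichlet eta value `∑ (-1)ⁿ⁺¹ / nˢ = (1 - 2¹⁻ˢ) ζ(s)` for natural `s ≥ 2`. -/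
noncomputable def etaReal (s : ℕ) : ℝ := (1 - 2 / 2 ^ s) * zetaReal s

lemma hasSum_zetaReal (s : ℕ) (hs : 2 ≤ s) : HasSum (fun n : ℕ => 1 / (n : ℝ) ^ s) (zetaReal s) :=
  (Real.summable_one_div_nat_pow.2 hs).hasSum

lemma hasSum_eta (s : ℕ) (hs : 2 ≤ s) :
    HasSum (fun n : ℕ => (-1) ^ n / (n : ℝ) ^ s) (-etaReal s) := by
  have hZ := hasSum_zetaReal s hs
  have he : HasSum (fun n : ℕ => 1 / ((2 * n : ℕ) : ℝ) ^ s) (1 / 2 ^ s * zetaReal s) := by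
    refine (hZ.mul_left (1 / 2 ^ s)).congr_fun fun n => ?_
    push_cast
    rw [mul_pow, div_mul_div_comm, one_mul]
  have ho : Summable (fun n : ℕ => 1 / ((2 * n + 1 : ℕ) : ℝ) ^ s) :=
    hZ.summable.comp_injective (i := fun n : ℕ => 2 * n + 1) fun a b h => by
      simpa using h
  -- `ζ(s)` is the even part plus the odd part, the alternating series is their difference.
  have htot := hZ.unique (he.even_add_odd (f := fun n : ℕ => 1 / (n : ℝ) ^ s) ho.hasSum)
  have := HasSum.even_add_odd (f := fun n : ℕ => (-1) ^ n / (n : ℝ) ^ s)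
    (he.congr_fun fun n => by simp [pow_mul])
    (ho.hasSum.neg.congr_fun fun n => by simp [pow_succ, pow_mul, neg_div])
  convert this using 1
  rw [etaReal]
  linear_combination -htot

/-! ### Column sums in general -/

/-- For `n ≠ k` this is `1 / (n² (n² - k²)) = k⁻² (1 / (n² - k²) - 1 / n²)`; the last term corrects
the diagonal. -/
lemma col_succ (m k n : ℕ) (hk : 1 ≤ k) :
    colTerm (2 * (m + 1) + 1) k n = 1 / (k : ℝ) ^ 2 * (colTerm (2 * m + 1) k n
      - 2 * ((-1) ^ n / (n : ℝ) ^ (2 * m + 2))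
      + if n = k then 2 * (-1) ^ k / (k : ℝ) ^ (2 * m + 2) else 0) := by
  have hk' : (k : ℝ) ≠ 0 := by exact_mod_cast (by omega : k ≠ 0)
  simp only [colTerm]
  rcases Nat.eq_zero_or_pos n with rfl | hn
  · simp [show 0 ≠ k by omega]
  have hn' : (n : ℝ) ≠ 0 := by exact_mod_cast hn.ne'
  have hnk : (n : ℝ) + k ≠ 0 := by positivity
  rw [show 2 * (m + 1) + 1 = 2 * m + 3 by ring]
  simp only [pow_add (n : ℝ), pow_add (k : ℝ)]
  by_cases h : n = k
  · subst h
    simp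
    field_simp
    ring
  · have h1 : (n : ℝ) - k ≠ 0 := sub_ne_zero.2 (by exact_mod_cast h)
    rw [if_neg h]
    field_simp
    ring

lemma hasSum_col (m k : ℕ) (hk : 1 ≤ k) :
    HasSum (colTerm (2 * m + 1) k) (1 / (k : ℝ) ^ (2 * m + 2)
      + (2 * m + 1) * ((-1) ^ k / (k : ℝ) ^ (2 * m + 2))
      + 2 * ∑ i ∈ Finset.range m, etaReal (2 * i + 2) * (1 / (k : ℝ) ^ (2 * (m - i)))) := by
  have hk' : (k : ℝ) ≠ 0 := by exact_mod_cast (by omega : k ≠ 0)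
  induction m with
  | zero =>
    convert hasSum_col_one k hk using 1
    simp
    ring
  | succ m ih =>
    have h := (((ih.sub ((hasSum_eta (2 * m + 2) (by omega)).mul_left 2)).add
      (hasSum_ite_eq k (2 * (-1) ^ k / (k : ℝ) ^ (2 * m + 2)))).mul_left (1 / (k : ℝ) ^ 2))
    refine hasSum_of_value_eq (h.congr_fun fun n => col_succ m k n hk) ?_
    rw [Finset.sum_range_succ]
    have : ∑ i ∈ Finset.range m, etaReal (2 * i + 2) * (1 / (k : ℝ) ^ (2 * (m + 1 - i))) =
        1 / (k : ℝ) ^ 2 * ∑ i ∈ Finset.range m, etaReal (2 * i + 2) * (1 / (k : ℝ) ^ (2 * (m - i))) := by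
      rw [Finset.mul_sum]
      refine Finset.sum_congr rfl fun i hi => ?_
      have := Finset.mem_range.1 hi
      rw [show 2 * (m + 1 - i) = 2 * (m - i) + 2 by omega, pow_add]
      field_simp
    rw [this, show m + 1 - m = 1 by omega]
    generalize ∑ i ∈ Finset.range m, etaReal (2 * i + 2) * (1 / (k : ℝ) ^ (2 * (m - i))) = S
    push_cast
    rw [show 2 * (m + 1) + 2 = (2 * m + 2) + 2 by ring, pow_add (k : ℝ) (2 * m + 2)]
    field_simp
    ring

/-! ### Comparison of the iterated sums -/

/-- The two iterated sums of the double series with `p = 2m + 1`, compared. -/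
lemma hasSum_alternating_harmonic (m : ℕ) :
    HasSum (fun n : ℕ => (-1) ^ n * (harmonic n : ℝ) / (n : ℝ) ^ (2 * m + 2))
      ((zetaReal (2 * m + 3) - (2 * m + 3) * etaReal (2 * m + 3)
        + 2 * ∑ i ∈ Finset.range m, etaReal (2 * i + 2) * zetaReal (2 * (m - i) + 1)) / 2) := by
  have hF := (summable_doubleTerm (2 * m + 1) (by omega)).hasSum
  have hrow := hF.prod_fiberwise fun n => hasSum_row (2 * m + 1) n (by omega)
  have hcol : HasSum (fun k : ℕ => 1 / (k : ℝ) ^ (2 * m + 3)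
      + (2 * m + 1) * ((-1) ^ k / (k : ℝ) ^ (2 * m + 3))
      + 2 * ∑ i ∈ Finset.range m, etaReal (2 * i + 2) * (1 / (k : ℝ) ^ (2 * (m - i) + 1)))
      (∑' x, doubleTerm (2 * m + 1) x) := by
    refine ((Equiv.prodComm ℕ ℕ).hasSum_iff.2 hF).prod_fiberwise fun k => ?_
    simp only [Function.comp, Equiv.prodComm_apply, Prod.swap, doubleTerm_eq]
    rcases Nat.eq_zero_or_pos k with rfl | hk
    · simp
    refine hasSum_of_value_eq ((hasSum_col m k hk).mul_left (1 / (k : ℝ))) ?_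
    symm
    rw [mul_add, mul_add, mul_left_comm _ (2 : ℝ), Finset.mul_sum (a := 1 / (k : ℝ))]
    congr 1
    · rw [show 2 * m + 3 = 2 * m + 2 + 1 by ring, pow_succ _ (2 * m + 2)]
      simp only [div_eq_mul_inv, mul_inv]
      ring
    · congr 1
      refine Finset.sum_congr rfl fun i _ => ?_
      rw [pow_succ]
      simp only [one_div, mul_inv]
      ring
  have hT := hcol.unique (((hasSum_zetaReal (2 * m + 3) (by omega)).add
    ((hasSum_eta (2 * m + 3) (by omega)).mul_left (2 * m + 1 : ℝ))).add
    ((hasSum_sum (s := Finset.range m) fun i hi =>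
      (hasSum_zetaReal (2 * (m - i) + 1) (by have := Finset.mem_range.1 hi; omega)).mul_left
        (etaReal (2 * i + 2))).mul_left 2))
  rw [hT] at hrow
  have h := (hrow.add ((hasSum_eta (2 * m + 3) (by omega)).mul_left 2)).mul_left (1 / 2)
  refine hasSum_of_value_eq (h.congr_fun fun n => ?_) ?_
  · rw [show 2 * m + 3 = 2 * m + 1 + 1 + 1 by ring, show 2 * m + 2 = 2 * m + 1 + 1 by ring,
      pow_succ _ (2 * m + 1 + 1), pow_succ _ (2 * m + 1)]
    simp only [div_eq_mul_inv, mul_inv]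
    ring
  · ring

lemma riemannZeta_eq_zetaReal (s : ℕ) (hs : 2 ≤ s) : riemannZeta s = (zetaReal s : ℂ) := by
  rw [zeta_nat_eq_tsum_of_gt_one (by omega), zetaReal, Complex.ofReal_tsum]
  push_cast
  rfl

/-- For every natural number `m ≥ 1`,
`∑_{ℓ=1}^∞ (-1)^{ℓ+1} H_ℓ/ℓ^{2m}
  = (m - (2m+1)/2^{2m+1})·ζ(2m+1) - ∑_{k=1}^{m-1} (1 - 2^{1-2k})·ζ(2k)·ζ(2m-2k+1)`. -/
theorem alternating_euler_sum_eq (m : ℕ) (hm : 1 ≤ m) :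
    ((∑' ℓ : ℕ, (-1) ^ ℓ * (harmonic (ℓ + 1) : ℝ) / (ℓ + 1 : ℝ) ^ (2 * m) : ℝ) : ℂ) =
      ((m : ℂ) - (2 * m + 1) / 2 ^ (2 * m + 1)) * riemannZeta (2 * m + 1) -
        ∑ k ∈ Finset.Icc 1 (m - 1),
          (1 - (2 : ℂ) ^ ((1 : ℤ) - 2 * k)) * riemannZeta (2 * k) *
            riemannZeta (2 * (m : ℂ) - 2 * k + 1) := by
  obtain ⟨M, rfl⟩ := Nat.exists_eq_succ_of_ne_zero (by omega : m ≠ 0)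
  have h := hasSum_alternating_harmonic M
  -- The term at `n = 0` vanishes because `harmonic 0 = 0`.
  rw [← hasSum_nat_add_iff' 1] at h
  have h' := h.neg
  have hS : (∑' ℓ : ℕ, (-1) ^ ℓ * (harmonic (ℓ + 1) : ℝ) / (ℓ + 1 : ℝ) ^ (2 * M.succ) : ℝ) =
      ((2 * M + 3) * etaReal (2 * M + 3) - zetaReal (2 * M + 3)
        - 2 * ∑ i ∈ Finset.range M, etaReal (2 * i + 2) * zetaReal (2 * (M - i) + 1)) / 2 := by
    refine (hasSum_of_value_eq (h'.congr_fun fun ℓ => ?_) ?_).tsum_eq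
    · push_cast
      rw [pow_succ (-1 : ℝ), show 2 * M.succ = 2 * M + 2 from rfl]
      ring
    · rw [Finset.sum_range_one, harmonic_zero]
      push_cast
      ring
  rw [hS]
  have hsum : ∑ k ∈ Finset.Icc 1 (M.succ - 1),
      (1 - (2 : ℂ) ^ ((1 : ℤ) - 2 * k)) * riemannZeta (2 * k) *
        riemannZeta (2 * ((M.succ : ℕ) : ℂ) - 2 * k + 1) =
      ((∑ i ∈ Finset.range M, etaReal (2 * i + 2) * zetaReal (2 * (M - i) + 1) : ℝ) : ℂ) := by
    rw [show Finset.Icc 1 (M.succ - 1) = Finset.Ico (0 + 1) (M + 1) by ext; simp,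
      ← Finset.sum_Ico_add' _ 0 M 1, ← Finset.range_eq_Ico, Complex.ofReal_sum]
    refine Finset.sum_congr rfl fun i hi => ?_
    have hi' := Finset.mem_range.1 hi
    have e1 : (2 : ℂ) * ((i + 1 : ℕ) : ℂ) = ((2 * i + 2 : ℕ) : ℂ) := by push_cast; ring
    have e2 : 2 * ((M.succ : ℕ) : ℂ) - ((2 * i + 2 : ℕ) : ℂ) + 1
        = ((2 * (M - i) + 1 : ℕ) : ℂ) := by
      push_cast [Nat.cast_sub hi'.le]; ring
    have e3 : (2 : ℂ) ^ ((1 : ℤ) - 2 * ((i + 1 : ℕ) : ℤ)) = 2 / 2 ^ (2 * i + 2) := by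
      rw [zpow_sub₀ two_ne_zero, zpow_one,
        show (2 : ℤ) * ((i + 1 : ℕ) : ℤ) = ((2 * i + 2 : ℕ) : ℤ) by push_cast; ring, zpow_natCast]
    rw [e1, e2, e3, riemannZeta_eq_zetaReal _ (by omega), riemannZeta_eq_zetaReal _ (by omega), etaReal]
    push_cast
    ring
  have e4 : (2 : ℂ) * ((M.succ : ℕ) : ℂ) + 1 = ((2 * M + 3 : ℕ) : ℂ) := by push_cast; ring
  rw [hsum, e4, riemannZeta_eq_zetaReal _ (by omega), etaReal, show 2 * M.succ + 1 = 2 * M + 3 from rfl]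
  push_cast
  field_simp
  ring
end

section
/- For every natural number n ≥ 0 and all real numbers a, b > 0, ∫_{-∞}^{∞} x^{2n} · log(1 + e^{ax}) / (1 + e^{bx}) dx = (2n)! · (1 - 2^{-2n-1}) · ((2n+1)·a^{2n+2} + b^{2n+2}) / (a^{2n+1} · b^{2n+2}) · ζ(2n+2). -/
/-!
Fold the integral at the origin. Since `log (1 + e^{ax}) = ax + log (1 + e^{-ax})` and
`1 / (1 + e^{bx}) + 1 / (1 + e^{-bx}) = 1`, the integrand `f` satisfies, for `x > 0`,
`f x + f (-x) = a x^{2n+1} / (1 + e^{bx}) + x^{2n} log (1 + e^{-ax})`.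
The parameters `a` and `b` are thereby separated. Expanding each summand in powers of `e^{-bx}`,
respectively `e^{-ax}`, and integrating termwise (`hasSum_integral_pow_mul`) gives multiples of the
alternating series `∑ (-1)^i / (i+1)^{2n+2}`, which is `(1 - 2^{-2n-1}) ζ(2n+2)`
(`hasSum_alternating`).
-/

open Real MeasureTheory

lemma integrableOn_pow_mul_exp (m : ℕ) {c : ℝ} (hc : 0 < c) :
    IntegrableOn (fun t : ℝ => t ^ m * exp (-(c * t))) (Set.Ioi 0) := by
  have h := integrableOn_rpow_mul_exp_neg_mul_rpow (p := 1) (s := m) (b := c)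
    (by have : (0 : ℝ) ≤ m := m.cast_nonneg
        linarith) one_pos hc
  simpa using h

lemma integral_pow_mul_exp (m : ℕ) {c : ℝ} (hc : 0 < c) :
    ∫ t in Set.Ioi (0 : ℝ), t ^ m * exp (-(c * t)) = m.factorial / c ^ (m + 1) := by
  have h := integral_rpow_mul_exp_neg_mul_Ioi (a := m + 1) (r := c) (by positivity) hc
  rw [Real.Gamma_nat_eq_factorial] at h
  have e : (1 / c) ^ ((m : ℝ) + 1) = 1 / c ^ (m + 1) := by
    rw [← Nat.cast_succ, rpow_natCast]; simp
  rw [e] at h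
  simp only [add_sub_cancel_right, rpow_natCast] at h
  rw [h]; ring

/-- Termwise integration against `t ^ m` of a series in powers of `exp (-c t)`: the Mellin transform
of the series at the integer `m + 1` is a Dirichlet series. -/
lemma hasSum_integral_pow_mul (m : ℕ) {c : ℝ} (hc : 0 < c) (u : ℕ → ℝ) (F : ℝ → ℝ)
    (hF : ∀ t : ℝ, 0 < t → HasSum (fun i : ℕ => u i * exp (-(c * t)) ^ (i + 1)) (F t))
    (hu : Summable fun i : ℕ => |u i| / ((i : ℝ) + 1) ^ (m + 1)) :
    HasSum (fun i : ℕ => m.factorial / c ^ (m + 1) * (u i / ((i : ℝ) + 1) ^ (m + 1)))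
      (∫ t in Set.Ioi (0 : ℝ), t ^ m * F t) := by
  have hci (i : ℕ) : 0 < c * ((i : ℝ) + 1) := by positivity
  have hint (i : ℕ) := (integrableOn_pow_mul_exp m (hci i)).const_mul (u i)
  have hS : Summable fun i : ℕ => ∫ t in Set.Ioi (0 : ℝ),
      ‖u i * (t ^ m * exp (-(c * ((i : ℝ) + 1) * t)))‖ := by
    refine (hu.mul_left (m.factorial / c ^ (m + 1))).congr fun i => ?_
    have : ∫ t in Set.Ioi (0 : ℝ), ‖u i * (t ^ m * exp (-(c * ((i : ℝ) + 1) * t)))‖ =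
        ∫ t in Set.Ioi (0 : ℝ), |u i| * (t ^ m * exp (-(c * ((i : ℝ) + 1) * t))) := by
      refine setIntegral_congr_fun measurableSet_Ioi fun t (ht : 0 < t) => ?_
      simp only [norm_mul, Real.norm_eq_abs]
      rw [abs_of_nonneg (by positivity : 0 ≤ t ^ m), abs_of_pos (exp_pos _)]
    rw [this, integral_const_mul, integral_pow_mul_exp m (hci i), mul_pow]
    field_simp
  convert! hasSum_integral_of_summable_integral_norm hint hS using 1
  · funext i
    rw [integral_const_mul, integral_pow_mul_exp m (hci i), mul_pow]
    field_simp
  · refine setIntegral_congr_fun measurableSet_Ioi fun t (ht : 0 < t) => ?_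
    rw [← (hF t ht).tsum_eq, ← tsum_mul_left]
    refine tsum_congr fun i => ?_
    rw [← exp_nat_mul, mul_left_comm]
    congr 3
    push_cast; ring

/-- Real form of `ζ(k)` as a series indexed from `1`. -/
lemma exists_hasSum_zeta {k : ℕ} (hk : 1 < k) :
    ∃ Z : ℝ, HasSum (fun i : ℕ => 1 / ((i : ℝ) + 1) ^ k) Z ∧ (Z : ℂ) = riemannZeta k := by
  have hs : Summable fun i : ℕ => 1 / ((i : ℝ) + 1) ^ k := by
    have := (summable_nat_add_iff 1).2 (Real.summable_one_div_nat_pow.2 hk)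
    simpa using this
  refine ⟨_, hs.hasSum, ?_⟩
  have := zeta_eq_tsum_one_div_nat_add_one_cpow (s := k) (by simpa using hk)
  rw [this]
  push_cast
  simp

/-- The Dirichlet eta function at an integer: the terms of even denominator sum to `2^{-k} ζ(k)`,
and changing their sign subtracts twice this amount. -/
lemma hasSum_alternating {k : ℕ} {Z : ℝ}
    (hZ : HasSum (fun i : ℕ => 1 / ((i : ℝ) + 1) ^ k) Z) :
    HasSum (fun i : ℕ => (-1) ^ i / ((i : ℝ) + 1) ^ k) ((1 - 2 / 2 ^ k) * Z) := by
  have hE : HasSum (fun j : ℕ => 1 / (((2 * j + 1 : ℕ) : ℝ) + 1) ^ k) (1 / 2 ^ k * Z) := by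
    convert! hZ.mul_left (1 / 2 ^ k) using 2 with j
    rw [div_mul_div_comm, ← mul_pow]
    push_cast; ring
  have hO : HasSum (fun j : ℕ => 1 / (((2 * j : ℕ) : ℝ) + 1) ^ k) (Z - 1 / 2 ^ k * Z) := by
    have h := (hZ.summable.comp_injective
      (fun x y h => by simpa using h : Function.Injective fun j : ℕ => 2 * j)).hasSum
    have := (h.even_add_odd (f := fun i : ℕ => 1 / ((i : ℝ) + 1) ^ k) hE).unique hZ
    rw [← eq_sub_of_add_eq this]
    exact h
  have := HasSum.even_add_odd (f := fun i : ℕ => (-1 : ℝ) ^ i / ((i : ℝ) + 1) ^ k)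
    (m := Z - 1 / 2 ^ k * Z) (m' := -(1 / 2 ^ k * Z))
    (by convert! hO using 2 with j; simp [pow_mul])
    (by convert! hE.neg using 2 with j; simp [pow_succ, pow_mul]; ring)
  convert! this using 1
  ring

lemma hasSum_inv_one_add_exp {y : ℝ} (hy : 0 < y) :
    HasSum (fun i : ℕ => (-1) ^ i * exp (-y) ^ (i + 1)) (1 / (1 + exp y)) := by
  have h1 : exp (-y) < 1 := by simpa using hy
  have := (hasSum_geometric_of_abs_lt_one (r := -exp (-y))
    (by rwa [abs_neg, abs_of_pos (exp_pos _)])).mul_left (exp (-y))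
  convert! this using 1
  · funext i
    rw [neg_pow (exp (-y))]; ring
  · rw [exp_neg]
    have := exp_pos y
    have h2 : 1 + exp y ≠ 0 := by positivity
    rw [sub_neg_eq_add, ← mul_inv, mul_add, mul_inv_cancel₀ this.ne', one_div]
    ring

lemma hasSum_log_one_add_exp_neg {y : ℝ} (hy : 0 < y) :
    HasSum (fun i : ℕ => (-1) ^ i / ((i : ℝ) + 1) * exp (-y) ^ (i + 1)) (log (1 + exp (-y))) := by
  have h1 : exp (-y) < 1 := by simpa using hy
  have := (hasSum_pow_div_log_of_abs_lt_one (x := -exp (-y))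
    (by rwa [abs_neg, abs_of_pos (exp_pos _)])).neg
  convert! this using 1
  · funext i
    rw [neg_pow (exp (-y))]; ring
  · simp

lemma log_one_add_exp (y : ℝ) : log (1 + exp y) = y + log (1 + exp (-y)) := by
  have : 1 + exp y = exp y * (1 + exp (-y)) := by
    rw [mul_add, ← exp_add]; simp [add_comm]
  rw [this, log_mul (exp_pos _).ne' (by positivity), log_exp]

lemma log_one_add_exp_nonneg (y : ℝ) : 0 ≤ log (1 + exp y) :=
  log_nonneg (by linarith [exp_pos y])

lemma log_one_add_exp_le (y : ℝ) : log (1 + exp y) ≤ exp y := by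
  linarith [log_le_sub_one_of_pos (by positivity : 0 < 1 + exp y)]

lemma one_div_one_add_exp_le (y : ℝ) : 1 / (1 + exp y) ≤ exp (-y) := by
  rw [exp_neg, ← one_div]
  exact one_div_le_one_div_of_le (exp_pos y) (by linarith)

lemma integrableOn_pow_mul_inv_one_add_exp (m : ℕ) {b : ℝ} (hb : 0 < b) :
    IntegrableOn (fun x : ℝ => x ^ m * (1 / (1 + exp (b * x)))) (Set.Ioi 0) := by
  refine (integrableOn_pow_mul_exp m hb).mono' (by measurability) ?_
  filter_upwards [ae_restrict_mem measurableSet_Ioi] with x (hx : 0 < x)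
  rw [norm_of_nonneg (by positivity)]
  gcongr
  exact one_div_one_add_exp_le _

lemma integrableOn_log (m : ℕ) {a : ℝ} (ha : 0 < a) :
    IntegrableOn (fun x : ℝ => x ^ m * log (1 + exp (-(a * x)))) (Set.Ioi 0) := by
  refine (integrableOn_pow_mul_exp m ha).mono' (by measurability) ?_
  filter_upwards [ae_restrict_mem measurableSet_Ioi] with x (hx : 0 < x)
  rw [norm_of_nonneg (mul_nonneg (by positivity) (log_one_add_exp_nonneg _))]
  gcongr
  exact log_one_add_exp_le _

/-- Folding the integral at the origin separates the two parameters. -/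
lemma integral_fold (n : ℕ) {a b : ℝ} (ha : 0 < a) (hb : 0 < b) :
    (∫ x : ℝ, x ^ (2 * n) * log (1 + exp (a * x)) / (1 + exp (b * x))) =
      a * (∫ x in Set.Ioi (0 : ℝ), x ^ (2 * n + 1) * (1 / (1 + exp (b * x)))) +
        ∫ x in Set.Ioi (0 : ℝ), x ^ (2 * n) * log (1 + exp (-(a * x))) := by
  set f : ℝ → ℝ := fun x => x ^ (2 * n) * log (1 + exp (a * x)) / (1 + exp (b * x)) with hf
  have hfm : Measurable f := by fun_prop
  have hsum : ∀ x, f x + f (-x) = a * (x ^ (2 * n + 1) * (1 / (1 + exp (b * x)))) +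
      x ^ (2 * n) * log (1 + exp (-(a * x))) := by
    intro x
    simp only [hf, (even_two_mul n).neg_pow, mul_neg]
    rw [log_one_add_exp (a * x), exp_neg (b * x)]
    have := exp_pos (b * x)
    field_simp
    ring
  have hG := ((integrableOn_pow_mul_inv_one_add_exp (2 * n + 1) hb).const_mul a).add (integrableOn_log (2 * n) ha)
  have hf0 : ∀ x, 0 ≤ f x := fun x =>
    div_nonneg (mul_nonneg ((even_two_mul n).pow_nonneg x) (log_one_add_exp_nonneg _))
      (by positivity)
  -- Both `f x` and `f (-x)` are nonnegative, so their integrable sum dominates each of them.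
  have hf1 : IntegrableOn f (Set.Ioi 0) := by
    refine hG.mono' hfm.aestronglyMeasurable (Filter.Eventually.of_forall fun x => ?_)
    rw [norm_of_nonneg (hf0 x)]
    refine le_trans ?_ (hsum x).le
    linarith [hf0 (-x)]
  have hf2 : IntegrableOn (fun x => f (-x)) (Set.Ioi 0) := by
    refine hG.mono' (hfm.comp measurable_neg).aestronglyMeasurable
      (Filter.Eventually.of_forall fun x => ?_)
    rw [norm_of_nonneg (hf0 (-x))]
    refine le_trans ?_ (hsum x).le
    linarith [hf0 x]
  have hf3 : IntegrableOn f (Set.Iic 0) := by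
    rw [← integrableOn_Ici_iff_integrableOn_Ioi] at hf2
    simpa using hf2.comp_neg
  rw [← intervalIntegral.integral_Iic_add_Ioi hf3 hf1]
  have h4 : ∫ x in Set.Iic (0 : ℝ), f x = ∫ x in Set.Ioi (0 : ℝ), f (-x) := by
    simp
  rw [h4, add_comm, ← integral_add hf1 hf2, ← integral_const_mul,
    ← integral_add ((integrableOn_pow_mul_inv_one_add_exp (2 * n + 1) hb).const_mul a) (integrableOn_log (2 * n) ha)]
  exact integral_congr_ae (Filter.Eventually.of_forall hsum)

/-- For every natural number `n ≥ 0` and all real `a, b > 0`,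
`∫_{-∞}^∞ x^{2n}·log(1+e^{ax})/(1+e^{bx}) dx
  = (2n)!·(1 - 2^{-2n-1})·((2n+1)a^{2n+2} + b^{2n+2})/(a^{2n+1}b^{2n+2})·ζ(2n+2)`. -/
theorem integral_even_pow_two_params (n : ℕ) (a b : ℝ) (ha : 0 < a) (hb : 0 < b) :
    ((∫ x : ℝ, x ^ (2 * n) * Real.log (1 + Real.exp (a * x)) / (1 + Real.exp (b * x)) : ℝ) : ℂ) =
      (Nat.factorial (2 * n) : ℂ) * (1 - (2 : ℂ) ^ (-2 * (n : ℤ) - 1)) *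
        (((2 * (n : ℂ) + 1) * (a : ℂ) ^ (2 * n + 2) + (b : ℂ) ^ (2 * n + 2)) /
          ((a : ℂ) ^ (2 * n + 1) * (b : ℂ) ^ (2 * n + 2))) * riemannZeta (2 * n + 2) := by
  obtain ⟨Z, hZ, hZ'⟩ := exists_hasSum_zeta (k := 2 * n + 2) (by omega)
  have hη := hasSum_alternating hZ
  have hA : ∫ x in Set.Ioi (0 : ℝ), x ^ (2 * n + 1) * (1 / (1 + exp (b * x))) =
      (2 * n + 1).factorial / b ^ (2 * n + 2) * ((1 - 2 / 2 ^ (2 * n + 2)) * Z) := by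
    refine (hasSum_integral_pow_mul (2 * n + 1) hb (fun i => (-1) ^ i) _
      (fun t ht => hasSum_inv_one_add_exp (mul_pos hb ht)) ?_).unique (hη.mul_left _)
    simpa using hZ.summable
  have hB : ∫ x in Set.Ioi (0 : ℝ), x ^ (2 * n) * log (1 + exp (-(a * x))) =
      (2 * n).factorial / a ^ (2 * n + 1) * ((1 - 2 / 2 ^ (2 * n + 2)) * Z) := by
    have e (i : ℕ) (z : ℝ) : z / ((i : ℝ) + 1) / ((i : ℝ) + 1) ^ (2 * n + 1) =
        z / ((i : ℝ) + 1) ^ (2 * n + 2) := by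
      rw [div_div, ← pow_succ']
    have h := hasSum_integral_pow_mul (2 * n) ha (fun i => (-1) ^ i / ((i : ℝ) + 1)) _
      (fun t ht => hasSum_log_one_add_exp_neg (mul_pos ha ht)) (by
        refine hZ.summable.congr fun i => ?_
        rw [abs_div, abs_of_pos (by positivity : (0 : ℝ) < (i : ℝ) + 1), e]
        simp)
    simp only [e] at h
    exact h.unique (hη.mul_left _)
  have hz : (2 : ℂ) ^ (-2 * (n : ℤ) - 1) = 2 / 2 ^ (2 * n + 2) := by
    rw [show -2 * (n : ℤ) - 1 = -((2 * n + 1 : ℕ) : ℤ) by push_cast; ring, zpow_neg, zpow_natCast,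
      pow_succ (2 : ℂ) (2 * n + 1)]
    field_simp
  rw [integral_fold n ha hb, hA, hB, hz, Nat.factorial_succ]
  push_cast at hZ' ⊢
  rw [← hZ']
  have ha' : (a : ℂ) ≠ 0 := by exact_mod_cast ha.ne'
  have hb' : (b : ℂ) ≠ 0 := by exact_mod_cast hb.ne'
  field_simp
  ring
end

section
/- ∫_{-∞}^{∞} x · log(1 + e^{x/2}) / (1 + e^x) dx = -(π²/4)·log 2 - (3/8)·ζ(3). -/
/-! With `σ(v) = 1 / (1 + e^v)` and `x = 2u`, the integral is `4 ∫ u σ(2u) log(1 + e^u) du` over `ℝ`.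
Since `log(1 + e^u) = ∫_{a > 0} σ(a - u) da` (`fermi_layer`), Fubini (`integrable_double`) reduces
the problem to the one-parameter integral `H(a) = ∫ u σ(2u) σ(a - u) du`.

Partial fractions in `e^u` turn the integrand of `H(a)` into `σ(2a)` times an odd function minus
`σ(2a) u (σ(u - a) - σ(2u))`. The last integral is found by comparing `σ` with the step function
`1_{v < 0}` (`sommerfeld`): the difference `ψ` is odd up to a null set, with `∫ v ψ(v) dv = π²/6`,
so `∫ u (σ(u - a) - σ(2u)) du = π²/6 + a²/2 - π²/24 = π²/8 + a²/2`, and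
`H(a) = -(π²/8 + a²/2) σ(2a)` (`integral_fermi_mul_fermi`).

Integrating over `a > 0` leaves the half-line moments of `σ`: the zeroth is `log 2`, and for `k ≥ 1`
the `k`-th is `k! (1 - 2^{-k}) ζ(k + 1)` (`integral_pow_mul_fermi`), by expanding `σ` into a
geometric series. The first moment gives the `π²/6` above, the second gives the `ζ(3)` term. -/

open Real MeasureTheory
open Set Filter Topology

/-! ### The Fermi function -/

/-- The Fermi function `σ(v) = 1 / (1 + e^v)`. -/
noncomputable def fermi (v : ℝ) : ℝ := (1 + exp v)⁻¹

lemma fermi_pos (v : ℝ) : 0 < fermi v := by unfold fermi; positivity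

lemma continuous_fermi : Continuous fermi := by
  unfold fermi
  exact Continuous.inv₀ (by fun_prop) (fun v => by positivity)

lemma fermi_le_exp_neg (v : ℝ) : fermi v ≤ exp (-v) := by
  unfold fermi
  rw [exp_neg]
  exact inv_anti₀ (exp_pos v) (by linarith)

lemma fermi_le_one (v : ℝ) : fermi v ≤ 1 := by
  unfold fermi
  exact inv_le_one_of_one_le₀ (by linarith [exp_pos v])

lemma fermi_neg (v : ℝ) : fermi (-v) = 1 - fermi v := by
  unfold fermi
  rw [exp_neg]
  have := exp_pos v
  field_simp
  ring

/-! ### Half-line moments of the Fermi function -/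

/-- The alternating zeta sum `∑ (-1)^n / (n+1)^m`: changing the sign of the terms with even
denominator subtracts twice their sum `2^{-m} ζ(m)`. -/
lemma hasSum_alternating_zeta {m : ℕ} (hm : 1 < m) :
    HasSum (fun n : ℕ => (-1 : ℂ) ^ n / ((n : ℂ) + 1) ^ m)
      ((1 - 2 / 2 ^ m) * riemannZeta m) := by
  have hf0 : Summable (fun n : ℕ => 1 / (((n : ℂ) + 1)) ^ m) := by
    have h1 : Summable (fun n : ℕ => 1 / (n : ℂ) ^ m) := by
      have := Real.summable_one_div_nat_pow.mpr hm
      rw [← Complex.summable_ofReal] at this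
      simpa using this
    simpa using (summable_nat_add_iff 1).mpr h1
  have hz : riemannZeta m = ∑' n : ℕ, 1 / (((n : ℂ) + 1)) ^ m := by
    rw [zeta_eq_tsum_one_div_nat_add_one_cpow (by simpa using hm)]
    simp [Complex.cpow_natCast]
  have hf : HasSum (fun n : ℕ => 1 / (((n : ℂ) + 1)) ^ m) (riemannZeta m) := by
    rw [hz]; exact hf0.hasSum
  have hodd : HasSum (fun k : ℕ => 1 / (((2 * k + 1 : ℕ) : ℂ) + 1) ^ m)
      (1 / 2 ^ m * riemannZeta m) := by
    convert! hf.mul_left (1 / 2 ^ m : ℂ) using 2 with k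
    rw [div_mul_div_comm, ← mul_pow]
    push_cast
    ring_nf
  have heven : HasSum (fun k : ℕ => 1 / (((2 * k : ℕ) : ℂ) + 1) ^ m)
      (riemannZeta m - 1 / 2 ^ m * riemannZeta m) := by
    have hs : Summable (fun k : ℕ => 1 / (((2 * k : ℕ) : ℂ) + 1) ^ m) :=
      hf0.comp_injective (i := fun k : ℕ => 2 * k) (fun a b h => by simpa using h)
    have := (hs.hasSum.even_add_odd (f := fun n : ℕ => 1 / (((n : ℂ) + 1)) ^ m) hodd).unique hf
    rw [← eq_sub_of_add_eq this]
    exact hs.hasSum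
  convert! HasSum.even_add_odd (f := fun n : ℕ => (-1 : ℂ) ^ n / ((n : ℂ) + 1) ^ m)
    (m := riemannZeta m - 1 / 2 ^ m * riemannZeta m) (m' := -(1 / 2 ^ m * riemannZeta m)) ?_ ?_ using 1
  · ring
  · simpa [pow_mul] using heven
  · convert! hodd.neg using 2 with k
    simp [pow_succ, pow_mul, neg_div]

lemma hasSum_fermi {t : ℝ} (ht : 0 < t) :
    HasSum (fun n : ℕ => (-1 : ℝ) ^ n * exp (-((n : ℝ) + 1) * t)) (fermi t) := by
  have h1 : |(-exp (-t))| < 1 := by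
    rw [abs_neg, abs_of_pos (exp_pos _)]
    rw [← exp_zero]; exact exp_lt_exp.mpr (by linarith)
  convert! (hasSum_geometric_of_abs_lt_one h1).mul_left (exp (-t)) using 1
  · funext n
    rw [neg_pow (exp (-t)), ← exp_nat_mul, mul_left_comm, ← exp_add]
    ring_nf
  · unfold fermi
    rw [exp_neg, sub_neg_eq_add]
    have := exp_pos t
    have h2 : 1 + (exp t)⁻¹ ≠ 0 := by positivity
    field_simp
    ring

/-- Half-line moments of the Fermi function, as the Mellin transform at `k + 1` of the exponential
series of `hasSum_fermi`. -/
lemma integral_pow_mul_fermi {k : ℕ} (hk : 1 ≤ k) :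
    ((∫ v in Ioi (0 : ℝ), v ^ k * fermi v : ℝ) : ℂ) =
      k.factorial * (1 - 1 / 2 ^ k) * riemannZeta ((k + 1 : ℕ) : ℂ) := by
  have key := hasSum_mellin (ι := ℕ) (a := fun n => (-1 : ℂ) ^ n) (p := fun n => (n : ℝ) + 1)
    (F := fun t => (fermi t : ℂ)) (s := ((k + 1 : ℕ) : ℂ))
    (fun i => Or.inr (by positivity)) (by simp; positivity)
    (fun t ht => by
      have := Complex.hasSum_ofReal.mpr (hasSum_fermi ht)
      simpa using this)
    (by
      have := (summable_nat_add_iff 1).mpr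
        (Real.summable_one_div_nat_pow.mpr (show 1 < k + 1 by omega))
      rw [Complex.natCast_re]
      simp only [Real.rpow_natCast]
      simpa using this)
  have h2 := (hasSum_alternating_zeta (show 1 < k + 1 by omega)).mul_left (k.factorial : ℂ)
  have h3 : mellin (fun t => (fermi t : ℂ)) ((k + 1 : ℕ) : ℂ) =
      ((∫ v in Ioi (0 : ℝ), v ^ k * fermi v : ℝ) : ℂ) := by
    rw [mellin, ← integral_complex_ofReal]
    refine setIntegral_congr_fun measurableSet_Ioi (fun v hv => ?_)
    simp
  rw [← h3]
  have h4 := key.unique (by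
    convert! h2 using 2 with n
    rw [Complex.cpow_natCast]
    push_cast
    rw [Complex.Gamma_nat_eq_factorial]
    ring)
  rw [h4]
  field_simp
  ring

/-! ### Comparison with the step function -/

lemma integrable_abs_pow_mul_exp (k : ℕ) : Integrable (fun v : ℝ => |v| ^ k * exp (-|v|)) := by
  -- A nonzero Bochner integral certifies integrability; here its value is `2 Γ(k + 1)`.
  apply Integrable.of_integral_ne_zero
  rw [integral_comp_abs (f := fun v => v ^ k * exp (-v))]
  have h := Real.Gamma_eq_integral (s := (k : ℝ) + 1) (by positivity)
  have h2 : ∫ v in Ioi (0 : ℝ), v ^ k * exp (-v) = Real.Gamma ((k : ℝ) + 1) := by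
    rw [h]
    refine setIntegral_congr_fun measurableSet_Ioi (fun v hv => ?_)
    simp [mul_comm]
  rw [h2]
  have := Real.Gamma_pos_of_pos (s := (k : ℝ) + 1) (by positivity)
  positivity

lemma integrable_of_abs_le {f : ℝ → ℝ} (k : ℕ) (hf : Measurable f)
    (h : ∀ v, |f v| ≤ |v| ^ k * exp (-|v|)) : Integrable f :=
  (integrable_abs_pow_mul_exp k).mono' hf.aestronglyMeasurable (Eventually.of_forall h)

/-- The indicator function of the negative half-line, the sharp-cutoff limit of `fermi`. -/
noncomputable def negStep (v : ℝ) : ℝ := (Iio (0 : ℝ)).indicator 1 v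

/-- The difference `ψ` between the Fermi function and the step function; it equals
`sign(v) σ(|v|)` for `v ≠ 0`, so it is odd off `0` and decays exponentially on both sides. -/
noncomputable def psi (v : ℝ) : ℝ := fermi v - negStep v

lemma measurable_psi : Measurable psi :=
  continuous_fermi.measurable.sub ((measurable_one).indicator measurableSet_Iio)

lemma psi_of_nonneg {v : ℝ} (hv : 0 ≤ v) : psi v = fermi |v| := by
  simp [psi, negStep, not_lt.mpr hv, abs_of_nonneg hv]

lemma psi_of_neg {v : ℝ} (hv : v < 0) : psi v = -fermi |v| := by
  simp [psi, negStep, hv, abs_of_neg hv, fermi_neg]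

lemma abs_psi (v : ℝ) : |psi v| = fermi |v| := by
  rcases le_or_gt 0 v with hv | hv
  · rw [psi_of_nonneg hv, abs_of_pos (fermi_pos _)]
  · rw [psi_of_neg hv, abs_neg, abs_of_pos (fermi_pos _)]

lemma mul_psi (v : ℝ) : v * psi v = |v| * fermi |v| := by
  rcases le_or_gt 0 v with hv | hv
  · rw [psi_of_nonneg hv]; simp [abs_of_nonneg hv]
  · rw [psi_of_neg hv]; simp [abs_of_neg hv]

lemma integrable_psi : Integrable psi :=
  integrable_of_abs_le 0 measurable_psi (fun v => by
    rw [abs_psi]; simpa using fermi_le_exp_neg |v|)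

lemma integrable_mul_psi : Integrable (fun v => v * psi v) :=
  integrable_of_abs_le 1 (measurable_id.mul measurable_psi) (fun v => by
    rw [abs_mul, abs_psi, pow_one]
    exact mul_le_mul_of_nonneg_left (fermi_le_exp_neg _) (abs_nonneg _))

lemma integral_psi : ∫ v, psi v = 0 := by
  have h1 : ∫ v, psi (-v) = ∫ v, psi v := integral_neg_eq_self psi volume
  have h2 : ∫ v, psi (-v) = ∫ v, -psi v := by
    refine integral_congr_ae ?_
    filter_upwards [compl_mem_ae_iff.mpr (measure_singleton (0 : ℝ))] with v hv
    rcases lt_or_gt_of_ne (show v ≠ 0 from hv) with h | h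
    · rw [psi_of_neg h, psi_of_nonneg (by linarith), abs_neg, neg_neg]
    · rw [psi_of_nonneg h.le, psi_of_neg (by linarith), abs_neg]
  rw [integral_neg] at h2
  linarith

lemma integral_mul_psi : ∫ v, v * psi v = π ^ 2 / 6 := by
  simp_rw [mul_psi]
  rw [integral_comp_abs (f := fun v => v * fermi v)]
  have h := integral_pow_mul_fermi (k := 1) le_rfl
  norm_num [riemannZeta_two] at h
  have h' : ∫ v in Ioi (0 : ℝ), v * fermi v = 1 / 2 * (π ^ 2 / 6) := by
    apply Complex.ofReal_injective
    rw [h]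
    push_cast
    ring
  rw [h']; ring

lemma integral_sq_mul_fermi :
    ((∫ v in Ioi (0 : ℝ), v ^ 2 * fermi v : ℝ) : ℂ) = 3 / 2 * riemannZeta 3 := by
  have h := integral_pow_mul_fermi (k := 2) (by norm_num)
  rw [h]
  norm_num

lemma integrableOn_pow_mul_fermi (k : ℕ) :
    IntegrableOn (fun v : ℝ => v ^ k * fermi v) (Ioi 0) := by
  refine (integrable_abs_pow_mul_exp k).integrableOn.mono'
    ((continuous_pow k).mul continuous_fermi).aestronglyMeasurable.restrict ?_
  filter_upwards [self_mem_ae_restrict measurableSet_Ioi] with v hv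
  have hv : 0 < v := hv
  rw [norm_mul, norm_pow, norm_eq_abs, norm_eq_abs, abs_of_pos (fermi_pos v), abs_of_pos hv]
  exact mul_le_mul_of_nonneg_left (fermi_le_exp_neg _) (by positivity)

/-! ### The integral as a superposition over shifts -/

/-- `log(1 + e^u)` as a superposition of shifted Fermi functions, which have the explicit
antiderivative `a ↦ -log(1 + e^{u-a})`. -/
lemma fermi_layer (u : ℝ) :
    IntegrableOn (fun a => fermi (a - u)) (Ioi 0) ∧
      ∫ a in Ioi (0 : ℝ), fermi (a - u) = log (1 + exp u) := by
  have hd : ∀ a ∈ Ici (0 : ℝ),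
      HasDerivAt (fun a => -log (1 + exp (u - a))) (fermi (a - u)) a := by
    intro a _
    have h1 : HasDerivAt (fun a => 1 + exp (u - a)) (exp (u - a) * (-1)) a :=
      (((hasDerivAt_id a).const_sub u).exp).const_add 1
    convert! (h1.log (by positivity)).neg using 1
    unfold fermi
    rw [show a - u = -(u - a) by ring, exp_neg]
    have := exp_pos (u - a)
    field_simp
    ring
  have hl : Tendsto (fun a => -log (1 + exp (u - a))) atTop (𝓝 0) := by
    have h1 : Tendsto (fun a : ℝ => u - a) atTop atBot :=
      tendsto_atBot_add_const_left _ u tendsto_neg_atTop_atBot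
    have h2 := ((tendsto_exp_atBot.comp h1).const_add 1)
    have h3 := (h2.log (by norm_num)).neg
    simpa using h3
  have hp : ∀ a ∈ Ioi (0 : ℝ), 0 ≤ fermi (a - u) := fun a _ => (fermi_pos _).le
  refine ⟨integrableOn_Ioi_deriv_of_nonneg' hd hp hl, ?_⟩
  rw [integral_Ioi_of_hasDerivAt_of_nonneg' hd hp hl]
  simp

lemma integral_fermi : ∫ v in Ioi (0 : ℝ), fermi v = log 2 := by
  have := (fermi_layer 0).2
  simp only [sub_zero, exp_zero] at this
  rw [this]; norm_num

/-- A Sommerfeld-type evaluation: replacing both Fermi functions by step functions gives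
`∫_0^a u du = a²/2`, and the corrections `ψ(u - a)` and `ψ(2u)` contribute `π²/6` and `-π²/24`. -/
lemma sommerfeld {a : ℝ} (ha : 0 < a) :
    Integrable (fun u => u * (fermi (u - a) - fermi (2 * u))) ∧
    ∫ u, u * (fermi (u - a) - fermi (2 * u)) = π ^ 2 / 8 + a ^ 2 / 2 := by
  have hdec : (fun u => u * (fermi (u - a) - fermi (2 * u))) = fun u =>
      (((u - a) * psi (u - a) + a * psi (u - a)) - 2⁻¹ * ((2 * u) * psi (2 * u)))
        + (Ico 0 a).indicator (fun u => u) u := by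
    funext u
    have : (Ico 0 a).indicator (fun u => u) u = u * (negStep (u - a) - negStep (2 * u)) := by
      unfold negStep
      simp only [indicator_apply, mem_Ico, mem_Iio, Pi.one_apply]
      split_ifs <;> first | (exfalso; grind) | simp
    rw [this]
    unfold psi
    ring
  have i1 : Integrable (fun u => (u - a) * psi (u - a)) := integrable_mul_psi.comp_sub_right a
  have i2 : Integrable (fun u => a * psi (u - a)) := (integrable_psi.comp_sub_right a).const_mul a
  have i3 : Integrable (fun u => (2⁻¹ : ℝ) * ((2 * u) * psi (2 * u))) :=
    (integrable_mul_psi.comp_mul_left' (two_ne_zero)).const_mul _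
  have i4 : Integrable ((Ico 0 a).indicator (fun u : ℝ => u)) := by
    rw [integrable_indicator_iff measurableSet_Ico]
    exact (continuous_id.integrableOn_Icc).mono_set Ico_subset_Icc_self
  have e1 : ∫ u, (u - a) * psi (u - a) = π ^ 2 / 6 := by
    rw [integral_sub_right_eq_self (fun u => u * psi u) a, integral_mul_psi]
  have e2 : ∫ u, a * psi (u - a) = 0 := by
    rw [integral_const_mul, integral_sub_right_eq_self psi a, integral_psi, mul_zero]
  have e3 : ∫ u, (2⁻¹ : ℝ) * ((2 * u) * psi (2 * u)) = π ^ 2 / 24 := by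
    rw [integral_const_mul, Measure.integral_comp_mul_left (fun u => u * psi u) 2,
      integral_mul_psi, smul_eq_mul, abs_of_pos (by norm_num)]
    ring
  have e4 : ∫ u, (Ico 0 a).indicator (fun u : ℝ => u) u = a ^ 2 / 2 := by
    rw [integral_indicator measurableSet_Ico, integral_Ico_eq_integral_Ioc,
      ← intervalIntegral.integral_of_le ha.le, integral_id]
    ring
  rw [hdec]
  refine ⟨((i1.add i2).sub i3).add i4, ?_⟩
  have f1 := integral_add ((i1.add i2).sub i3) i4
  have f2 := integral_sub (i1.add i2) i3
  have f3 := integral_add i1 i2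
  simp only [Pi.add_apply, Pi.sub_apply] at f1 f2 f3
  rw [f1, f2, f3, e1, e2, e3, e4]
  ring

lemma exp_mul_fermi_two_mul_le (u : ℝ) : exp u * fermi (2 * u) ≤ exp (-|u|) := by
  rcases le_or_gt 0 u with hu | hu
  · rw [abs_of_nonneg hu]
    calc exp u * fermi (2 * u) ≤ exp u * exp (-(2 * u)) :=
          mul_le_mul_of_nonneg_left (fermi_le_exp_neg _) (exp_pos u).le
      _ = exp (-u) := by rw [← exp_add]; ring_nf
  · rw [abs_of_neg hu, neg_neg]
    exact mul_le_of_le_one_right (exp_pos u).le (fermi_le_one _)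

/-- The inner integral, after exchanging the order of integration. -/
lemma integral_fermi_mul_fermi {a : ℝ} (ha : 0 < a) :
    ∫ u, u * fermi (2 * u) * fermi (a - u) = -(π ^ 2 / 8 + a ^ 2 / 2) * fermi (2 * a) := by
  obtain ⟨hi, he⟩ := sommerfeld ha
  have hodd : ∫ u, u * (exp u * fermi (2 * u)) = 0 := by
    have h1 := integral_neg_eq_self (fun u => u * (exp u * fermi (2 * u))) volume
    have h2 : (fun u => -u * (exp (-u) * fermi (2 * -u))) =
        fun u => -(u * (exp u * fermi (2 * u))) := by
      funext u
      unfold fermi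
      have h := exp_pos u
      rw [show 2 * -u = -(u + u) by ring, two_mul, exp_neg, exp_neg, exp_add]
      field_simp
      ring
    rw [h2, integral_neg] at h1
    linarith
  have hoi : Integrable (fun u => u * (exp u * fermi (2 * u))) :=
    integrable_of_abs_le 1 ((continuous_id.mul (continuous_exp.mul
      (continuous_fermi.comp (continuous_const_mul 2)))).measurable) (fun u => by
        rw [abs_mul, pow_one, abs_of_pos (mul_pos (exp_pos _) (fermi_pos _))]
        exact mul_le_mul_of_nonneg_left (exp_mul_fermi_two_mul_le u) (abs_nonneg _))
  -- With `t = e^u`, `A = e^a`: `t / ((t + A)(1 + t²))` equals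
  -- `((A t + 1) / (1 + t²) - A / (t + A)) / (1 + A²)`.
  have hdec : (fun u => u * fermi (2 * u) * fermi (a - u)) = fun u =>
      fermi (2 * a) * (exp a * (u * (exp u * fermi (2 * u)))
        - u * (fermi (u - a) - fermi (2 * u))) := by
    funext u
    unfold fermi
    have hA := exp_pos a
    have hU := exp_pos u
    rw [exp_sub, exp_sub, two_mul, two_mul, exp_add, exp_add]
    field_simp
    ring
  rw [hdec, integral_const_mul, integral_sub (hoi.const_mul _) hi, integral_const_mul, hodd, he]
  ring

/-- Absolute integrability on `ℝ × (0, ∞)`, which justifies Fubini. Integrating the absolute value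
over `a` gives `|u| σ(2u) log(1 + e^u) ≤ |u| σ(2u) e^u ≤ |u| e^{-|u|}`. -/
lemma integrable_double :
    Integrable (Function.uncurry fun u a : ℝ => u * fermi (2 * u) * fermi (a - u))
      (volume.prod (volume.restrict (Ioi 0))) := by
  have hc : Continuous (Function.uncurry fun u a : ℝ => u * fermi (2 * u) * fermi (a - u)) := by
    have := continuous_fermi
    unfold Function.uncurry
    fun_prop
  rw [integrable_prod_iff hc.aestronglyMeasurable]
  refine ⟨Eventually.of_forall fun u => (fermi_layer u).1.const_mul (u * fermi (2 * u)), ?_⟩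
  have h : (fun u => ∫ a in Ioi (0 : ℝ),
      ‖Function.uncurry (fun u a : ℝ => u * fermi (2 * u) * fermi (a - u)) (u, a)‖) =
      fun u => |u| * fermi (2 * u) * log (1 + exp u) := by
    funext u
    rw [← (fermi_layer u).2, ← integral_const_mul]
    congr 1
    funext a
    simp [abs_of_pos (fermi_pos _)]
  rw [h]
  have hm : Measurable (fun u : ℝ => |u| * fermi (2 * u) * log (1 + exp u)) := by
    have := continuous_fermi.measurable
    fun_prop
  refine integrable_of_abs_le 1 hm (fun u => ?_)
  have hl : log (1 + exp u) ≤ exp u := by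
    have := log_le_sub_one_of_pos (show 0 < 1 + exp u by positivity)
    linarith
  have hl0 : 0 ≤ log (1 + exp u) := log_nonneg (by linarith [exp_pos u])
  rw [abs_mul, abs_mul, abs_abs, abs_of_pos (fermi_pos _), abs_of_nonneg hl0, pow_one, mul_assoc]
  refine mul_le_mul_of_nonneg_left ?_ (abs_nonneg _)
  calc fermi (2 * u) * log (1 + exp u) ≤ fermi (2 * u) * exp u :=
        mul_le_mul_of_nonneg_left hl (fermi_pos _).le
    _ ≤ exp (-|u|) := by rw [mul_comm]; exact exp_mul_fermi_two_mul_le u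

/-- The integral reduced to the second moment of the Fermi function. -/
lemma integral_real :
    ∫ x : ℝ, x * log (1 + exp (x / 2)) / (1 + exp x) =
      -(π ^ 2 / 4) * log 2 - 1 / 4 * ∫ v in Ioi (0 : ℝ), v ^ 2 * fermi v := by
  have h1 : ∫ x : ℝ, x * log (1 + exp (x / 2)) / (1 + exp x) =
      4 * ∫ u : ℝ, u * fermi (2 * u) * log (1 + exp u) := by
    have h := Measure.integral_comp_mul_left
      (fun x : ℝ => x * log (1 + exp (x / 2)) / (1 + exp x)) 2
    rw [smul_eq_mul, abs_of_pos (by norm_num)] at h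
    rw [← integral_const_mul, eq_comm, ← mul_right_inj' (show (2⁻¹ : ℝ) ≠ 0 by norm_num), ← h,
      ← integral_const_mul]
    congr 1
    funext u
    rw [mul_div_cancel_left₀ _ (two_ne_zero)]
    unfold fermi
    ring
  have h2 : ∫ u : ℝ, u * fermi (2 * u) * log (1 + exp u) =
      ∫ a in Ioi (0 : ℝ), ∫ u : ℝ, u * fermi (2 * u) * fermi (a - u) := by
    rw [← integral_integral_swap integrable_double]
    congr 1
    funext u
    rw [integral_const_mul, (fermi_layer u).2]
  have h3 : ∫ a in Ioi (0 : ℝ), ∫ u : ℝ, u * fermi (2 * u) * fermi (a - u) =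
      ∫ a in Ioi (0 : ℝ), (fun v => -(π ^ 2 / 8) * fermi v - 1 / 8 * (v ^ 2 * fermi v)) (2 * a) := by
    refine setIntegral_congr_fun measurableSet_Ioi (fun a ha => ?_)
    simp only [integral_fermi_mul_fermi ha]
    ring
  have i0 : IntegrableOn (fun v => -(π ^ 2 / 8) * fermi v) (Ioi 0) := by
    have h := integrableOn_pow_mul_fermi 0
    simp only [pow_zero, one_mul] at h
    exact h.const_mul _
  rw [h1, h2, h3, integral_comp_mul_left_Ioi
    (fun v => -(π ^ 2 / 8) * fermi v - 1 / 8 * (v ^ 2 * fermi v)) 0 two_pos, mul_zero,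
    integral_sub i0 ((integrableOn_pow_mul_fermi 2).const_mul _), integral_const_mul,
    integral_const_mul, integral_fermi, smul_eq_mul]
  ring

/-- `∫_{-∞}^∞ x·log(1+e^{x/2})/(1+e^x) dx = -(π²/4)·log 2 - (3/8)·ζ(3)`. -/
theorem integral_x_log_exp_half : 
    ((∫ x : ℝ, x * Real.log (1 + Real.exp (x / 2)) / (1 + Real.exp x) : ℝ) : ℂ) =
      -((π : ℂ) ^ 2 / 4) * (Real.log 2 : ℂ) - 3 / 8 * riemannZeta 3 := by
  rw [integral_real, Complex.ofReal_sub, Complex.ofReal_mul, Complex.ofReal_mul,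
    integral_sq_mul_fermi]
  push_cast
  ring
end
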